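/- arXiv:2206.00618 — 13 statements merged into one kernel-verified Lean document; each statement's English description precedes it below -/
import Mathlib

section
/- Let f, g : ℝⁿ → ℝ be quadratic functionals, f(x) = xᵀA_f x + 2 b_fᵀ x + c_f and g(x) = xᵀA_g x + 2 b_gᵀ x + c_g, with A_f, A_g symmetric real n×n matrices. Suppose there exists x₀ ∈ ℝⁿ with g(x₀) < 0. Then the following are equivalent: (i) there is no x ∈ ℝⁿ with f(x) < 0 and g(x) ≤ 0; (ii) there exists γ ≥ 0 such that f(x) + γ·g(x) ≥ 0 for all x ∈ ℝⁿ. -/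
open Matrix

lemma uni_quad (a b c d e k : ℝ) (hk : k < 0) (h1 : 0 < d + e + k)
    (h : ∀ t : ℝ, d * t ^ 2 + e * t + k ≤ 0 → 0 ≤ a * t ^ 2 + b * t + c) :
    (a + b + c) * k ≤ c * (d + e + k) := by
  by_contra hcon
  push Not at hcon
  have hc : 0 ≤ c := by
    have := h 0 (by simpa using hk.le)
    simpa using this
  obtain ⟨A, hA⟩ : ∃ A, A = -k * a + c * d := ⟨_, rfl⟩
  obtain ⟨B, hB⟩ : ∃ B, B = -k * b + c * e := ⟨_, rfl⟩
  have hAB : A + B < 0 := by rw [hA, hB]; linarith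
  have key : ∀ t : ℝ, d * t ^ 2 + e * t + k = 0 → 0 ≤ t * (A * t + B) := by
    intro t ht
    have h2 := mul_nonneg (neg_pos.2 hk).le (h t ht.le)
    have : t * (A * t + B) = -k * (a * t ^ 2 + b * t + c) + c * (d * t ^ 2 + e * t + k) := by
      rw [hA, hB]; ring
    rw [this, ht]; linarith
  obtain ⟨t0, ht0, hq0⟩ : ∃ t ∈ Set.Ioo (0:ℝ) 1, d * t ^ 2 + e * t + k = 0 := by
    have := intermediate_value_Ioo (f := fun t : ℝ => d * t ^ 2 + e * t + k) (zero_le_one)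
      (by fun_prop)
    exact this (show (0:ℝ) ∈ _ from ⟨by simpa using hk, by simpa using h1⟩)
  obtain ⟨h0, h01⟩ := ht0
  have h3 : 0 ≤ A * t0 + B := nonneg_of_mul_nonneg_right (key t0 hq0) h0
  have hA0 : A < 0 := by
    by_contra hh
    push Not at hh
    nlinarith
  have hB0 : 0 < B := by nlinarith
  by_cases hd : d = 0
  · subst hd
    have he : 0 < e := by linarith
    obtain ⟨M, hM⟩ : ∃ M, M = (c * e - c * k) / (-A) + 1 := ⟨_, rfl⟩
    have hck : c * k ≤ 0 := mul_nonpos_of_nonneg_of_nonpos hc hk.le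
    have hce : 0 ≤ c * e := mul_nonneg hc he.le
    have hM1 : 1 ≤ M := by
      have : 0 ≤ (c * e - c * k) / (-A) := div_nonneg (by linarith) (by linarith)
      linarith
    have hAM : A * M = -(c * e - c * k) + A := by
      have hAne : A ≠ 0 := hA0.ne
      rw [hM]; field_simp
    have h4 := h (-M) (by nlinarith)
    have h5 := mul_nonneg (neg_pos.2 hk).le h4
    have h6 : -k * (a * (-M) ^ 2 + b * (-M) + c) = M * (A * M - B + c * e) - c * k := by
      rw [hA, hB]; ring
    rw [h6, hAM] at h5
    nlinarith
  · obtain ⟨t1, ht1⟩ : ∃ t1, t1 = k / (d * t0) := ⟨_, rfl⟩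
    have hprod : d * t0 * t1 = k := by rw [ht1]; field_simp
    have he : e = -d * (t0 + t1) := by
      have : t0 * (e + d * (t0 + t1)) = 0 := by linear_combination hq0 + hprod
      rcases mul_eq_zero.1 this with h' | h' <;> linarith
    have h7 := key t1 (by rw [he]; linear_combination -hprod)
    have h8 : 0 < d * (1 - t0) * (1 - t1) := by
      have : d * (1 - t0) * (1 - t1) = d + e + k := by rw [he]; linear_combination hprod
      linarith
    rcases lt_or_gt_of_ne hd with hd | hd
    · have : 1 < t1 := by
        by_contra hh
        push Not at hh
        have := mul_nonneg (mul_nonneg (neg_pos.2 hd).le (sub_pos.2 h01).le) (sub_nonneg.2 hh)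
        linarith
      have h9 : 0 ≤ A * t1 + B := nonneg_of_mul_nonneg_right h7 (by linarith)
      nlinarith
    · have : t1 < 0 := by
        by_contra hh
        push Not at hh
        have := mul_nonneg (mul_pos hd h0).le hh
        linarith
      nlinarith [mul_pos_of_neg_of_neg this hA0]

lemma quad_line {n : ℕ} (A : Matrix (Fin n) (Fin n) ℝ) (b : Fin n → ℝ) (c : ℝ)
    (y v : Fin n → ℝ) (t : ℝ) :
    (y + t • v) ⬝ᵥ A.mulVec (y + t • v) + 2 * (b ⬝ᵥ (y + t • v)) + c =
      (v ⬝ᵥ A.mulVec v) * t ^ 2 + (v ⬝ᵥ A.mulVec y + y ⬝ᵥ A.mulVec v + 2 * (b ⬝ᵥ v)) * t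
        + (y ⬝ᵥ A.mulVec y + 2 * (b ⬝ᵥ y) + c) := by
  simp only [mulVec_add, mulVec_smul, dotProduct_add, add_dotProduct, dotProduct_smul,
    smul_dotProduct, smul_eq_mul]
  ring

/-- Yakubovich S-Lemma: for quadratic functionals `f`, `g` on ℝⁿ with a Slater
point `g x₀ < 0`, the system `f x < 0`, `g x ≤ 0` has no solution iff there is a
nonnegative multiplier `γ` with `f x + γ * g x ≥ 0` for all `x`. -/
theorem stmt_0 (n : ℕ) (Af Ag : Matrix (Fin n) (Fin n) ℝ)
    (hAf : Af.IsSymm) (hAg : Ag.IsSymm)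
    (bf bg : Fin n → ℝ) (cf cg : ℝ)
    (f g : (Fin n → ℝ) → ℝ)
    (hf : ∀ x, f x = x ⬝ᵥ Af.mulVec x + 2 * (bf ⬝ᵥ x) + cf)
    (hg : ∀ x, g x = x ⬝ᵥ Ag.mulVec x + 2 * (bg ⬝ᵥ x) + cg)
    (hslater : ∃ x₀ : Fin n → ℝ, g x₀ < 0) :
    (¬ ∃ x : Fin n → ℝ, f x < 0 ∧ g x ≤ 0) ↔
      ∃ γ : ℝ, 0 ≤ γ ∧ ∀ x : Fin n → ℝ, 0 ≤ f x + γ * g x := by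
  constructor
  · intro hno
    have hi : ∀ x, g x ≤ 0 → 0 ≤ f x := by
      intro x hx
      by_contra hh
      exact hno ⟨x, not_le.1 hh, hx⟩
    have pair : ∀ x y, 0 < g x → g y < 0 → f x * g y ≤ f y * g x := by
      intro x y hx hy
      have lf := fun t => quad_line Af bf cf y (x - y) t
      have lg := fun t => quad_line Ag bg cg y (x - y) t
      simp only [← hf] at lf
      simp only [← hg] at lg
      have ef := lf 1
      have eg := lg 1
      have hxy : y + (1:ℝ) • (x - y) = x := by simp
      rw [hxy, one_pow, mul_one, mul_one] at ef eg
      rw [ef, eg]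
      refine uni_quad _ _ _ _ _ _ hy (by rw [← eg]; exact hx) ?_
      intro t ht
      rw [← lg] at ht
      rw [← lf]
      exact hi _ ht
    obtain ⟨x₀, hx₀⟩ := hslater
    let S : Set ℝ := {r | ∃ y, g y < 0 ∧ r = f y / (-g y)}
    have hne : S.Nonempty := ⟨_, x₀, hx₀, rfl⟩
    have hlb : ∀ r ∈ S, 0 ≤ r := by
      rintro r ⟨y, hy, rfl⟩
      exact div_nonneg (hi y hy.le) (by linarith)
    refine ⟨sInf S, le_csInf hne hlb, fun x => ?_⟩
    rcases lt_trichotomy (g x) 0 with hx | hx | hx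
    · have : sInf S ≤ f x / (-g x) := csInf_le ⟨0, hlb⟩ ⟨x, hx, rfl⟩
      rw [le_div_iff₀ (by linarith)] at this
      linarith
    · rw [hx]; simpa using hi x hx.le
    · have : -f x / g x ≤ sInf S := by
        refine le_csInf hne ?_
        rintro r ⟨y, hy, rfl⟩
        rw [div_le_div_iff₀ hx (by linarith)]
        linarith [pair x y hx hy]
      rw [div_le_iff₀ hx] at this
      linarith
  · rintro ⟨γ, hγ, h⟩ ⟨x, hfx, hgx⟩
    have := h x
    have := mul_nonpos_of_nonneg_of_nonpos hγ hgx
    linarith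
end

section
/- Let f_0, …, f_m : ℝⁿ → ℝ be quadratic functionals f_k(x) = xᵀA_k x + 2 b_kᵀ x + c_k (A_k symmetric). Suppose the set Ω₀ is convex. Then exactly one of the following two statements holds: (1) there exists x ∈ ℝⁿ such that f_k(x) < 0 for all k = 0, …, m; (2) there exists γ ∈ ℝ^{m+1} with γ_k ≥ 0 for all k and γ ≠ 0 such that Σ_{k=0}^{m} γ_k f_k(x) ≥ 0 for all x ∈ ℝⁿ. -/
open Matrix

/-- Generalized S-Lemma: if the set Ω₀ associated with the quadratic functionals
`f 0, …, f m` is convex, then exactly one of the following holds: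
(1) some `x` satisfies `f k x < 0` for all `k`;
(2) some nonzero nonnegative `γ` satisfies `∑ k, γ k * f k x ≥ 0` for all `x`. -/
theorem stmt_1 (n m : ℕ)
    (A : Fin (m + 1) → Matrix (Fin n) (Fin n) ℝ) (hA : ∀ k, (A k).IsSymm)
    (b : Fin (m + 1) → Fin n → ℝ) (c : Fin (m + 1) → ℝ)
    (f : Fin (m + 1) → (Fin n → ℝ) → ℝ)
    (hf : ∀ k x, f k x = x ⬝ᵥ (A k).mulVec x + 2 * (b k ⬝ᵥ x) + c k)
    (hΩ : Convex ℝ {v : Fin (m + 1) → ℝ | ∃ x : Fin n → ℝ, ∀ k, f k x < v k}) :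
    Xor' (∃ x : Fin n → ℝ, ∀ k, f k x < 0)
      (∃ γ : Fin (m + 1) → ℝ, (∀ k, 0 ≤ γ k) ∧ γ ≠ 0 ∧
        ∀ x : Fin n → ℝ, 0 ≤ ∑ k, γ k * f k x) := by
  have hopen : IsOpen {v : Fin (m + 1) → ℝ | ∃ x : Fin n → ℝ, ∀ k, f k x < v k} := by
    have : {v : Fin (m + 1) → ℝ | ∃ x : Fin n → ℝ, ∀ k, f k x < v k}
        = ⋃ x : Fin n → ℝ, ⋂ k, {v : Fin (m + 1) → ℝ | f k x < v k} := by
      ext v; simp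
    rw [this]
    exact isOpen_iUnion fun x => isOpen_iInter_of_finite fun k =>
      isOpen_lt continuous_const (continuous_apply k)
  by_cases h1 : ∃ x : Fin n → ℝ, ∀ k, f k x < 0
  · refine Or.inl ⟨h1, ?_⟩
    rintro ⟨γ, hγ, hne, hs⟩
    obtain ⟨x, hx⟩ := h1
    obtain ⟨j, hj⟩ := Function.ne_iff.1 hne
    have hj' : 0 < γ j := lt_of_le_of_ne (hγ j) (Ne.symm hj)
    have : ∑ k, γ k * f k x < ∑ k : Fin (m + 1), (0 : ℝ) :=
      Finset.sum_lt_sum (fun k _ => mul_nonpos_of_nonneg_of_nonpos (hγ k) (hx k).le)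
        ⟨j, Finset.mem_univ j, mul_neg_of_pos_of_neg hj' (hx j)⟩
    have h2 := hs x
    simp at this
    linarith
  · refine Or.inr ⟨?_, h1⟩
    obtain ⟨g, hg⟩ := geometric_hahn_banach_point_open (x := (0 : Fin (m + 1) → ℝ)) hΩ hopen
      (by simpa using h1)
    have hrep : ∀ v : Fin (m + 1) → ℝ, g v = ∑ k, g (Pi.single k 1) * v k := by
      intro v
      conv_lhs => rw [pi_eq_sum_univ' v]
      rw [map_sum]
      refine Finset.sum_congr rfl fun k _ => ?_
      rw [map_smul, smul_eq_mul, mul_comm]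
    have key : ∀ (x : Fin n → ℝ) (w : Fin (m + 1) → ℝ), (∀ k, 0 < w k) →
        0 < g (fun k => f k x) + g w := by
      intro x w hw
      have := hg ((fun k => f k x) + w) ⟨x, fun k => by simpa using hw k⟩
      simpa using this
    have hnn : ∀ k, 0 ≤ g (Pi.single k 1) := by
      intro k
      by_contra! hk
      have h0 := key 0 1 (fun _ => one_pos)
      set S := g (fun k => f k 0) + g 1 with hS
      have ht : 0 < S / (-g (Pi.single k 1)) := div_pos h0 (by linarith)
      have h2 := key 0 (1 + (S / (-g (Pi.single k 1))) • Pi.single k 1) (fun i => by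
        by_cases hi : i = k
        · subst hi; simp only [Pi.add_apply, Pi.smul_apply, Pi.single_eq_same, Pi.one_apply,
            smul_eq_mul]; linarith
        · simp [hi])
      rw [map_add, map_smul, smul_eq_mul, ← add_assoc, ← hS] at h2
      have h3 : S / (-g (Pi.single k 1)) * g (Pi.single k 1) = -S := by
        have := hk.ne
        field_simp
      linarith
    refine ⟨fun k => g (Pi.single k 1), hnn, ?_, ?_⟩
    · intro h
      have h0 := key 0 1 (fun _ => one_pos)
      have hz : ∀ k, g (Pi.single k 1) = 0 := fun k => congrFun h k
      rw [hrep, hrep 1] at h0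
      simp [hz] at h0
    · intro x
      rw [← hrep (fun k => f k x)]
      have h1' : 0 ≤ g 1 := by
        rw [hrep]
        exact Finset.sum_nonneg fun k _ => by simpa using hnn k
      by_contra! hlt
      set S := g (fun k => f k x) with hS
      have he : 0 < -S / (g 1 + 1) := div_pos (by linarith) (by linarith)
      have h2 := key x ((-S / (g 1 + 1)) • 1) (fun k => by simpa using he)
      rw [map_smul, smul_eq_mul, ← hS] at h2
      have h3 : -S / (g 1 + 1) * (g 1 + 1) = -S := div_mul_cancel₀ _ (by linarith)
      nlinarith
end

section
/- Consider the QCQP problem. Assume there exists γ' ∈ ℝᵐ with γ'_k ≥ 0 for all k, γ' ≠ 0, such that A_J + Σ_{k=1}^m γ'_k A_k is positive semidefinite. Let x* be a global minimizer of the QCQP, set f_0(x) := J(x) − J(x*), and assume the set Ω₀ associated with f_0, f_1, …, f_m is convex. Then there exists (γ_0, γ_1, …, γ_m) ∈ ℝ^{m+1} with all γ_k ≥ 0, not all zero, such that: (i) (γ_0 A_J + Σ_{k=1}^m γ_k A_k) x* + (γ_0 b_J + Σ_{k=1}^m γ_k b_k) = 0; (ii) γ_k f_k(x*) = 0 for k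 = 1, …, m; (iii) γ_0 A_J + Σ_{k=1}^m γ_k A_k is positive semidefinite. -/
open Matrix

theorem quad_aux {n : ℕ} (A : Matrix (Fin n) (Fin n) ℝ) (hA : A.IsSymm) (b x y : Fin n → ℝ)
    (c t : ℝ) : (x + t • y) ⬝ᵥ A.mulVec (x + t • y) + 2 * (b ⬝ᵥ (x + t • y)) + c =
      (x ⬝ᵥ A.mulVec x + 2 * (b ⬝ᵥ x) + c) + ((y ⬝ᵥ A.mulVec y) * (t * t)
        + (2 * (y ⬝ᵥ (A.mulVec x + b))) * t) := by
  have h : x ⬝ᵥ A.mulVec y = y ⬝ᵥ A.mulVec x := by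
    rw [Matrix.dotProduct_mulVec, ← Matrix.mulVec_transpose, hA.eq, dotProduct_comm]
  simp only [Matrix.mulVec_add, Matrix.mulVec_smul, dotProduct_add, add_dotProduct,
    dotProduct_smul, smul_dotProduct, smul_eq_mul, h, dotProduct_comm y b]
  ring

/-- Fritz-John necessary conditions for a global minimizer of a general QCQP,
assuming a nonzero nonnegative `γ'` making `A_J + ∑ γ'_k A_k` PSD and
convexity of the set Ω₀ associated with `f₀ := J - J x*` and `f₁, …, f_m`. -/
theorem stmt_2 (n m : ℕ)
    (AJ : Matrix (Fin n) (Fin n) ℝ) (A : Fin m → Matrix (Fin n) (Fin n) ℝ)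
    (hAJ : AJ.IsSymm) (hA : ∀ k, (A k).IsSymm)
    (bJ : Fin n → ℝ) (b : Fin m → Fin n → ℝ) (cJ : ℝ) (c : Fin m → ℝ)
    (J : (Fin n → ℝ) → ℝ) (f : Fin m → (Fin n → ℝ) → ℝ)
    (hJ : ∀ x, J x = x ⬝ᵥ AJ.mulVec x + 2 * (bJ ⬝ᵥ x) + cJ)
    (hf : ∀ k x, f k x = x ⬝ᵥ (A k).mulVec x + 2 * (b k ⬝ᵥ x) + c k)
    (hγ' : ∃ γ' : Fin m → ℝ, (∀ k, 0 ≤ γ' k) ∧ γ' ≠ 0 ∧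
      (AJ + ∑ k, γ' k • A k).PosSemidef)
    (xstar : Fin n → ℝ)
    (hfeas : ∀ k, f k xstar ≤ 0)
    (hmin : ∀ x : Fin n → ℝ, (∀ k, f k x ≤ 0) → J xstar ≤ J x)
    (hΩ : Convex ℝ {v : Fin (m + 1) → ℝ | ∃ x : Fin n → ℝ,
      J x - J xstar < v 0 ∧ ∀ k : Fin m, f k x < v k.succ}) :
    ∃ (γ0 : ℝ) (γ : Fin m → ℝ), 0 ≤ γ0 ∧ (∀ k, 0 ≤ γ k) ∧ ¬(γ0 = 0 ∧ γ = 0) ∧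
      (γ0 • AJ + ∑ k, γ k • A k).mulVec xstar + (γ0 • bJ + ∑ k, γ k • b k) = 0 ∧
      (∀ k, γ k * f k xstar = 0) ∧
      (γ0 • AJ + ∑ k, γ k • A k).PosSemidef := by
  classical
  set S : Set (Fin (m + 1) → ℝ) := {v : Fin (m + 1) → ℝ | ∃ x : Fin n → ℝ,
      J x - J xstar < v 0 ∧ ∀ k : Fin m, f k x < v k.succ} with hS
  have hopen : IsOpen S := by
    have : S = ⋃ x : Fin n → ℝ, ({v : Fin (m + 1) → ℝ | J x - J xstar < v 0} ∩
        ⋂ k : Fin m, {v : Fin (m + 1) → ℝ | f k x < v k.succ}) := by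
      ext v; simp [hS]
    rw [this]
    refine isOpen_iUnion fun x => ?_
    refine (isOpen_lt continuous_const (continuous_apply _)).inter ?_
    exact isOpen_iInter_of_finite fun k => isOpen_lt continuous_const (continuous_apply _)
  have h0 : (0 : Fin (m + 1) → ℝ) ∉ S := by
    rintro ⟨x, h1, h2⟩
    have := hmin x (fun k => (h2 k).le)
    simp at h1
    linarith
  obtain ⟨φ, hφ⟩ := geometric_hahn_banach_open_point hΩ hopen h0
  simp only [map_zero] at hφ
  set g : Fin (m + 1) → ℝ := fun i => - φ (Pi.single i 1) with hg
  have hrep : ∀ v, φ v = - (g 0 * v 0 + ∑ k : Fin m, g k.succ * v k.succ) := by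
    intro v
    have : v = ∑ i, v i • (Pi.single i 1 : Fin (m + 1) → ℝ) := by
      ext j; simp [Finset.sum_apply, Pi.single_apply]
    rw [← Fin.sum_univ_succ (fun i => g i * v i)]
    conv_lhs => rw [this]
    rw [map_sum, ← Finset.sum_neg_distrib]
    refine Finset.sum_congr rfl fun i _ => ?_
    simp [hg, mul_comm]
  have hone : ∀ t : ℝ, 0 ≤ t → ∀ i, (fun _ => (1 : ℝ)) + t • (Pi.single i 1 : Fin (m + 1) → ℝ) ∈ S := by
    intro t ht i
    have hnn : ∀ j, 0 ≤ t * (Pi.single i 1 : Fin (m + 1) → ℝ) j := by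
      intro j
      refine mul_nonneg ht ?_
      rw [Pi.single_apply]; split_ifs <;> norm_num
    refine ⟨xstar, ?_, fun k => ?_⟩
    · have := hnn 0
      simp only [Pi.add_apply, Pi.smul_apply, smul_eq_mul]
      linarith
    · have := hnn k.succ
      have := hfeas k
      simp only [Pi.add_apply, Pi.smul_apply, smul_eq_mul]
      linarith
  have hgn : ∀ i, 0 ≤ g i := by
    intro i
    by_contra hneg
    push Not at hneg
    have h1 := hφ _ (hone 0 le_rfl i)
    have h2 := hφ _ (hone (φ (fun _ => 1) / g i) (by
      refine div_nonneg_of_nonpos ?_ hneg.le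
      simpa using h1.le) i)
    have h3 : φ (Pi.single i 1) = - g i := by simp [hg]
    rw [map_add, map_smul, h3, smul_eq_mul] at h2
    have : φ (fun _ => 1) / g i * (- g i) = - φ (fun _ => 1) := by
      rw [mul_neg, div_mul_cancel₀ _ hneg.ne]
    rw [this] at h2
    linarith
  have hL : ∀ x, 0 ≤ g 0 * (J x - J xstar) + ∑ k : Fin m, g k.succ * f k x := by
    intro x
    have hs : 0 ≤ g 0 + ∑ k : Fin m, g k.succ :=
      add_nonneg (hgn _) (Finset.sum_nonneg fun k _ => hgn _)
    have key : ∀ ε : ℝ, 0 < ε → 0 < g 0 * (J x - J xstar) + ∑ k : Fin m, g k.succ * f k x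
        + ε * (g 0 + ∑ k : Fin m, g k.succ) := by
      intro ε hε
      have := hφ (Fin.cons (J x - J xstar + ε) (fun k => f k x + ε)) ⟨x, by simp [hε], by simp [hε]⟩
      rw [hrep] at this
      simp only [Fin.cons_zero, Fin.cons_succ, mul_add, Finset.sum_add_distrib, ← Finset.sum_mul] at this
      linarith
    by_contra hneg
    push Not at hneg
    set s := g 0 + ∑ k : Fin m, g k.succ
    set l := g 0 * (J x - J xstar) + ∑ k : Fin m, g k.succ * f k x
    have h := key (-l / (s + 1)) (by apply div_pos <;> linarith)
    have h' : -l / (s + 1) * s ≤ -l := by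
      rw [div_mul_eq_mul_div, div_le_iff₀ (by linarith)]
      nlinarith
    linarith
  have hcs : ∀ k : Fin m, g k.succ * f k xstar = 0 := by
    have h := hL xstar
    have hle : ∀ k ∈ Finset.univ, g (Fin.succ k) * f k xstar ≤ 0 := fun k _ =>
      mul_nonpos_of_nonneg_of_nonpos (hgn _) (hfeas k)
    have hz : ∑ k : Fin m, g k.succ * f k xstar = 0 := by
      refine le_antisymm (Finset.sum_nonpos hle) ?_
      simpa using h
    intro k
    exact (Finset.sum_eq_zero_iff_of_nonpos hle).1 hz k (Finset.mem_univ _)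
  set M := g 0 • AJ + ∑ k : Fin m, g k.succ • A k with hM
  set β := g 0 • bJ + ∑ k : Fin m, g k.succ • b k with hβ
  have hq : ∀ (y : Fin n → ℝ) (t : ℝ),
      0 ≤ (y ⬝ᵥ M.mulVec y) * (t * t) + (2 * (y ⬝ᵥ (M.mulVec xstar + β))) * t + 0 := by
    intro y t
    have h := hL (xstar + t • y)
    have e1 : J (xstar + t • y) - J xstar = (y ⬝ᵥ AJ.mulVec y) * (t * t)
        + (2 * (y ⬝ᵥ (AJ.mulVec xstar + bJ))) * t := by
      rw [hJ, hJ, quad_aux AJ hAJ, add_sub_cancel_left]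
    have e2 : ∀ k, g (Fin.succ k) * f k (xstar + t • y) =
        g k.succ * (y ⬝ᵥ (A k).mulVec y) * (t * t)
        + g k.succ * (y ⬝ᵥ ((A k).mulVec xstar + b k)) * (2 * t) := by
      intro k
      have : f k (xstar + t • y) = f k xstar + ((y ⬝ᵥ (A k).mulVec y) * (t * t)
        + (2 * (y ⬝ᵥ ((A k).mulVec xstar + b k))) * t) := by
        rw [hf, hf, quad_aux (A k) (hA k)]
      rw [this, mul_add, hcs]; ring
    rw [e1, Finset.sum_congr rfl (fun k _ => e2 k), Finset.sum_add_distrib,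
      ← Finset.sum_mul, ← Finset.sum_mul] at h
    have e3 : y ⬝ᵥ M.mulVec y = g 0 * (y ⬝ᵥ AJ.mulVec y)
        + ∑ k : Fin m, g k.succ * (y ⬝ᵥ (A k).mulVec y) := by
      simp [hM, Matrix.add_mulVec, Matrix.sum_mulVec, Matrix.smul_mulVec, dotProduct_add,
        dotProduct_sum, dotProduct_smul]
    have e4 : y ⬝ᵥ (M.mulVec xstar + β) = g 0 * (y ⬝ᵥ (AJ.mulVec xstar + bJ))
        + ∑ k : Fin m, g k.succ * (y ⬝ᵥ ((A k).mulVec xstar + b k)) := by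
      simp only [hM, hβ, Matrix.add_mulVec, Matrix.sum_mulVec, Matrix.smul_mulVec, dotProduct_add,
        dotProduct_sum, dotProduct_smul, smul_eq_mul, mul_add, Finset.sum_add_distrib]
      ring
    rw [e3, e4]
    linarith
  refine ⟨g 0, fun k => g k.succ, hgn 0, fun k => hgn _, ?_, ?_, hcs, ?_⟩
  · rintro ⟨h1, h2⟩
    have h3 := hφ _ (hone 0 le_rfl 0)
    rw [hrep, h1] at h3
    have h4 : ∀ k : Fin m, g k.succ = 0 := fun k => congrFun h2 k
    simp [h4] at h3
  · have hd := discrim_le_zero (hq (M.mulVec xstar + β))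
    unfold discrim at hd
    have : (M.mulVec xstar + β) ⬝ᵥ (M.mulVec xstar + β) = 0 := by
      nlinarith
    exact dotProduct_self_eq_zero.1 this
  · refine Matrix.PosSemidef.of_dotProduct_mulVec_nonneg ?_ ?_
    · have : M.IsSymm := by
        rw [Matrix.IsSymm, hM]
        simp [Matrix.transpose_sum, hAJ.eq, fun k => (hA k).eq]
      rw [Matrix.IsHermitian, Matrix.conjTranspose_eq_transpose_of_trivial]
      exact this
    · intro y
      have h1 := hq y 1
      have h2 := hq y (-1)
      simp only [star_trivial]
      linarith
end

section
/- Consider the QCQP problem. Assume there exists γ' ∈ ℝᵐ with γ'_k ≥ 0 for all k, γ' ≠ 0, such that A_J + Σ_{k=1}^m γ'_k A_k is positive semidefinite. Let x* be a global minimizer of the QCQP, set f_0(x) := J(x) − J(x*), and assume the set Ω₀ associated with f_0, f_1, …, f_m is convex. Assume moreover the Slater condition: there exists a point x₀ ∈ ℝⁿ with f_k(x₀) < 0 for all k = 1, …, m. Then there exist multipliers γ_1, …, γ_m ≥ 0 such that: (i) (A_J + Σ_{k=1}^m γ_k A_k) x* + (b_J + Σ_{k=1}^m γ_k b_k) = 0;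 (ii) γ_k f_k(x*) = 0 for k = 1, …, m; (iii) A_J + Σ_{k=1}^m γ_k A_k is positive semidefinite. -/
open Matrix

lemma quad_aux_s3 {n : ℕ} (M : Matrix (Fin n) (Fin n) ℝ) (hM : M.IsSymm) (B x : Fin n → ℝ)
    (h : ∀ y : Fin n → ℝ, x ⬝ᵥ M.mulVec x + 2 * (B ⬝ᵥ x) ≤ y ⬝ᵥ M.mulVec y + 2 * (B ⬝ᵥ y)) :
    M.mulVec x + B = 0 ∧ M.PosSemidef := by
  have key : ∀ (d : Fin n → ℝ) (t : ℝ),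
      0 ≤ (d ⬝ᵥ M.mulVec d) * (t * t) + (2 * ((M.mulVec x + B) ⬝ᵥ d)) * t + 0 := by
    intro d t
    have h1 := h (x + t • d)
    have h2 : x ⬝ᵥ M.mulVec d = M.mulVec x ⬝ᵥ d := by
      rw [Matrix.dotProduct_mulVec, ← Matrix.mulVec_transpose, hM.eq]
    have h3 : d ⬝ᵥ M.mulVec x = M.mulVec x ⬝ᵥ d := dotProduct_comm _ _
    simp only [Matrix.mulVec_add, Matrix.mulVec_smul, dotProduct_add, add_dotProduct,
      smul_dotProduct, dotProduct_smul, smul_eq_mul, h2, h3] at h1 ⊢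
    nlinarith [h1]
  constructor
  · have hd := discrim_le_zero (key (M.mulVec x + B))
    unfold discrim at hd
    have h0 : (M.mulVec x + B) ⬝ᵥ (M.mulVec x + B) = 0 := by
      apply pow_eq_zero_iff (two_ne_zero) |>.1
      nlinarith [sq_nonneg ((M.mulVec x + B) ⬝ᵥ (M.mulVec x + B))]
    exact dotProduct_self_eq_zero.1 h0
  · refine Matrix.PosSemidef.of_dotProduct_mulVec_nonneg ?_ ?_
    · rw [Matrix.IsHermitian, Matrix.conjTranspose_eq_transpose_of_trivial]
      exact hM
    · intro d
      have h1 := key d 1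
      have h2 := key d (-1)
      simp only [star_trivial]
      linarith

/-- Necessity of the KKT conditions for a global minimizer of a general QCQP,
under the PSD-combination assumption, convexity of Ω₀, and the Slater condition. -/
theorem stmt_3 (n m : ℕ)
    (AJ : Matrix (Fin n) (Fin n) ℝ) (A : Fin m → Matrix (Fin n) (Fin n) ℝ)
    (hAJ : AJ.IsSymm) (hA : ∀ k, (A k).IsSymm)
    (bJ : Fin n → ℝ) (b : Fin m → Fin n → ℝ) (cJ : ℝ) (c : Fin m → ℝ)
    (J : (Fin n → ℝ) → ℝ) (f : Fin m → (Fin n → ℝ) → ℝ)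
    (hJ : ∀ x, J x = x ⬝ᵥ AJ.mulVec x + 2 * (bJ ⬝ᵥ x) + cJ)
    (hf : ∀ k x, f k x = x ⬝ᵥ (A k).mulVec x + 2 * (b k ⬝ᵥ x) + c k)
    (hγ' : ∃ γ' : Fin m → ℝ, (∀ k, 0 ≤ γ' k) ∧ γ' ≠ 0 ∧
      (AJ + ∑ k, γ' k • A k).PosSemidef)
    (xstar : Fin n → ℝ)
    (hfeas : ∀ k, f k xstar ≤ 0)
    (hmin : ∀ x : Fin n → ℝ, (∀ k, f k x ≤ 0) → J xstar ≤ J x)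
    (hΩ : Convex ℝ {v : Fin (m + 1) → ℝ | ∃ x : Fin n → ℝ,
      J x - J xstar < v 0 ∧ ∀ k : Fin m, f k x < v k.succ})
    (hslater : ∃ x₀ : Fin n → ℝ, ∀ k, f k x₀ < 0) :
    ∃ γ : Fin m → ℝ, (∀ k, 0 ≤ γ k) ∧
      (AJ + ∑ k, γ k • A k).mulVec xstar + (bJ + ∑ k, γ k • b k) = 0 ∧
      (∀ k, γ k * f k xstar = 0) ∧
      (AJ + ∑ k, γ k • A k).PosSemidef := by
  obtain ⟨x₀, hx₀⟩ := hslater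
  set S : Set (Fin (m + 1) → ℝ) := {v : Fin (m + 1) → ℝ | ∃ x : Fin n → ℝ,
      J x - J xstar < v 0 ∧ ∀ k : Fin m, f k x < v k.succ} with hS
  have hopen : IsOpen S := by
    have : S = ⋃ x : Fin n → ℝ, ({v | J x - J xstar < v 0} ∩ ⋂ k : Fin m, {v | f k x < v k.succ}) := by
      ext v; simp [hS]
    rw [this]
    refine isOpen_iUnion fun x => IsOpen.inter ?_ (isOpen_iInter_of_finite fun k => ?_)
    · exact isOpen_lt continuous_const (continuous_apply _)
    · exact isOpen_lt continuous_const (continuous_apply _)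
  have h0 : (0 : Fin (m + 1) → ℝ) ∉ S := by
    rintro ⟨x, hx, hk⟩
    have := hmin x fun k => (hk k).le
    simp only [Pi.zero_apply] at hx
    linarith
  obtain ⟨g, hg⟩ := geometric_hahn_banach_open_point hΩ hopen h0
  set l : Fin (m + 1) → ℝ := fun i => - g (Pi.single i 1) with hl
  have hgl : ∀ v, g v = - ∑ i, l i * v i := by
    intro v
    conv_lhs => rw [← Finset.univ_sum_single v]
    rw [map_sum, ← Finset.sum_neg_distrib]
    refine Finset.sum_congr rfl fun i _ => ?_
    have : Pi.single i (v i) = v i • (Pi.single i 1 : Fin (m + 1) → ℝ) := by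
      rw [← Pi.single_smul]; simp
    rw [this, map_smul, hl]; simp; ring
  have hpos : ∀ v ∈ S, 0 < ∑ i, l i * v i := by
    intro v hv
    have := hg v hv
    rw [map_zero, hgl] at this
    linarith
  -- the value vector
  let F : (Fin n → ℝ) → Fin (m + 1) → ℝ := fun x => Fin.cons (J x - J xstar) (fun k => f k x)
  have hF : ∀ x (w : Fin (m + 1) → ℝ), (∀ i, 0 < w i) → F x + w ∈ S := by
    intro x w hw
    refine ⟨x, ?_, fun k => ?_⟩
    · simpa [F] using hw 0
    · simpa [F] using hw k.succ
  have hpos' : ∀ x (w : Fin (m + 1) → ℝ), (∀ i, 0 < w i) →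
      0 < ∑ i, l i * F x i + ∑ i, l i * w i := by
    intro x w hw
    have := hpos _ (hF x w hw)
    simpa [mul_add, Finset.sum_add_distrib] using this
  have hlnn : ∀ i, 0 ≤ l i := by
    intro i
    by_contra! hneg
    set a := ∑ i, l i * F xstar i + ∑ i, l i with ha
    have h1 := hpos' xstar (fun j => 1 + if j = i then |a| / (- l i) else 0) (by
      intro j
      have : 0 ≤ |a| / (- l i) := div_nonneg (abs_nonneg _) (by linarith)
      split_ifs <;> linarith)
    simp only [mul_add, Finset.sum_add_distrib, mul_one, mul_ite, mul_zero,
      Finset.sum_ite_eq', Finset.mem_univ, if_true] at h1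
    have h2 : l i * (|a| / (- l i)) = - |a| := by
      have := hneg.ne
      field_simp
    have h3 := le_abs_self a
    linarith
  have hnn : ∀ x, 0 ≤ ∑ i, l i * F x i := by
    intro x
    refine le_of_forall_pos_le_add fun ε hε => ?_
    have hs : 0 ≤ ∑ i, l i := Finset.sum_nonneg fun i _ => hlnn i
    have h1 := hpos' x (fun _ => ε / (∑ i, l i + 1)) (fun _ => by positivity)
    rw [← Finset.sum_mul] at h1
    have h2 : (∑ i, l i) * (ε / (∑ i, l i + 1)) ≤ ε := by
      rw [mul_div_assoc', div_le_iff₀ (by positivity)]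
      nlinarith
    linarith
  have hL : ∀ x, 0 ≤ l 0 * (J x - J xstar) + ∑ k : Fin m, l k.succ * f k x := by
    intro x
    have := hnn x
    rw [Fin.sum_univ_succ] at this
    simpa [F] using this
  have hl0 : 0 < l 0 := by
    refine lt_of_le_of_ne (hlnn 0) fun h => ?_
    have h1 := hL x₀
    rw [← h, zero_mul, zero_add] at h1
    have h2 : ∀ k : Fin m, l k.succ * f k x₀ ≤ 0 := fun k =>
      mul_nonpos_of_nonneg_of_nonpos (hlnn _) (hx₀ k).le
    have h3 : ∑ k : Fin m, l k.succ * f k x₀ = 0 :=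
      le_antisymm (Finset.sum_nonpos fun k _ => h2 k) h1
    have h4 := (Finset.sum_eq_zero_iff_of_nonpos (fun k _ => h2 k)).1 h3
    have h5 : ∀ i, l i = 0 := by
      intro i
      refine Fin.cases h.symm (fun k => ?_) i
      exact (mul_eq_zero.1 (h4 k (Finset.mem_univ _))).resolve_right (hx₀ k).ne
    have h6 := hpos' xstar (fun _ => 1) (fun _ => one_pos)
    simp [h5] at h6
  set γ : Fin m → ℝ := fun k => l k.succ / l 0 with hγ
  have hγ0 : ∀ k, 0 ≤ γ k := fun k => div_nonneg (hlnn _) hl0.le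
  have hLγ : ∀ x, 0 ≤ (J x - J xstar) + ∑ k : Fin m, γ k * f k x := by
    intro x
    have h1 := div_nonneg (hL x) hl0.le
    rw [add_div, mul_div_cancel_left₀ _ hl0.ne', Finset.sum_div] at h1
    simpa [hγ, div_mul_eq_mul_div] using h1
  have hle : ∀ k : Fin m, γ k * f k xstar ≤ 0 := fun k =>
    mul_nonpos_of_nonneg_of_nonpos (hγ0 k) (hfeas k)
  have hsum : ∑ k : Fin m, γ k * f k xstar = 0 := by
    refine le_antisymm (Finset.sum_nonpos fun k _ => hle k) ?_
    have := hLγ xstar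
    simpa using this
  have hcs : ∀ k, γ k * f k xstar = 0 := fun k =>
    (Finset.sum_eq_zero_iff_of_nonpos (fun k _ => hle k)).1 hsum k (Finset.mem_univ _)
  have hexp : ∀ x, J x + ∑ k : Fin m, γ k * f k x =
      x ⬝ᵥ (AJ + ∑ k, γ k • A k).mulVec x + 2 * ((bJ + ∑ k, γ k • b k) ⬝ᵥ x)
        + (cJ + ∑ k, γ k * c k) := by
    intro x
    simp only [hJ, hf, Matrix.add_mulVec, Matrix.sum_mulVec, Matrix.smul_mulVec, dotProduct_add,
      add_dotProduct, dotProduct_sum, sum_dotProduct, smul_dotProduct, dotProduct_smul,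
      smul_eq_mul, mul_add, Finset.sum_add_distrib, Finset.mul_sum]
    have : ∀ k, γ k * (2 * (b k ⬝ᵥ x)) = 2 * (γ k * (b k ⬝ᵥ x)) := fun k => by ring
    simp only [this]
    ring
  have hsymm : (AJ + ∑ k, γ k • A k).IsSymm := by
    rw [Matrix.IsSymm, Matrix.transpose_add, Matrix.transpose_sum, hAJ.eq]
    congr 1
    refine Finset.sum_congr rfl fun k _ => ?_
    rw [Matrix.transpose_smul, (hA k).eq]
  obtain ⟨hgrad, hpsd⟩ := quad_aux_s3 _ hsymm (bJ + ∑ k, γ k • b k) xstar (by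
    intro y
    have h1 := hexp xstar
    have h2 := hexp y
    have h3 := hLγ y
    linarith)
  exact ⟨γ, hγ0, hgrad, hcs, hpsd⟩
end

section
/- Consider the QCQP problem. Let x* be feasible for the QCQP and suppose there exist multipliers γ_1, …, γ_m ≥ 0 such that: (i) (A_J + Σ_{k=1}^m γ_k A_k) x* + (b_J + Σ_{k=1}^m γ_k b_k) = 0; (ii) γ_k f_k(x*) = 0 for k = 1, …, m; (iii) A_J + Σ_{k=1}^m γ_k A_k is positive semidefinite. Then x* is a global minimizer of the QCQP, i.e. J(x*) ≤ J(x) for every feasible x. -/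
open Matrix

/-- Sufficiency of the KKT conditions for global optimality in a general QCQP. -/
theorem stmt_4 (n m : ℕ)
    (AJ : Matrix (Fin n) (Fin n) ℝ) (A : Fin m → Matrix (Fin n) (Fin n) ℝ)
    (hAJ : AJ.IsSymm) (hA : ∀ k, (A k).IsSymm)
    (bJ : Fin n → ℝ) (b : Fin m → Fin n → ℝ) (cJ : ℝ) (c : Fin m → ℝ)
    (J : (Fin n → ℝ) → ℝ) (f : Fin m → (Fin n → ℝ) → ℝ)
    (hJ : ∀ x, J x = x ⬝ᵥ AJ.mulVec x + 2 * (bJ ⬝ᵥ x) + cJ)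
    (hf : ∀ k x, f k x = x ⬝ᵥ (A k).mulVec x + 2 * (b k ⬝ᵥ x) + c k)
    (xstar : Fin n → ℝ)
    (hfeas : ∀ k, f k xstar ≤ 0)
    (γ : Fin m → ℝ) (hγ : ∀ k, 0 ≤ γ k)
    (hstat : (AJ + ∑ k, γ k • A k).mulVec xstar + (bJ + ∑ k, γ k • b k) = 0)
    (hcomp : ∀ k, γ k * f k xstar = 0)
    (hpsd : (AJ + ∑ k, γ k • A k).PosSemidef) :
    ∀ x : Fin n → ℝ, (∀ k, f k x ≤ 0) → J xstar ≤ J x := by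
  intro x hx
  have hL : ∀ y, J y + ∑ k, γ k * f k y
      = y ⬝ᵥ (AJ + ∑ k, γ k • A k).mulVec y + 2 * ((bJ + ∑ k, γ k • b k) ⬝ᵥ y)
        + (cJ + ∑ k, γ k * c k) := by
    intro y
    have h1 : ∑ k, γ k * f k y = ∑ k, γ k * (y ⬝ᵥ (A k).mulVec y)
        + 2 * ∑ k, γ k * (b k ⬝ᵥ y) + ∑ k, γ k * c k := by
      rw [Finset.mul_sum, ← Finset.sum_add_distrib, ← Finset.sum_add_distrib]
      refine Finset.sum_congr rfl fun k _ => ?_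
      rw [hf]; ring
    rw [h1, hJ, Matrix.add_mulVec, Matrix.sum_mulVec, dotProduct_add, add_dotProduct,
      dotProduct_sum, sum_dotProduct]
    simp only [Matrix.smul_mulVec, dotProduct_smul, smul_dotProduct, smul_eq_mul]
    ring
  have h0 : ∑ k, γ k * f k xstar = 0 := Finset.sum_eq_zero fun k _ => hcomp k
  have h1 : ∑ k, γ k * f k x ≤ 0 :=
    Finset.sum_nonpos fun k _ => mul_nonpos_of_nonneg_of_nonpos (hγ k) (hx k)
  have e0 := hL xstar
  have e1 := hL x
  generalize AJ + ∑ k, γ k • A k = M at *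
  generalize bJ + ∑ k, γ k • b k = β at *
  have hq : 0 ≤ (x - xstar) ⬝ᵥ M.mulVec (x - xstar) := by
    simpa using hpsd.dotProduct_mulVec_nonneg (x - xstar)
  have hs : M.transpose = M := by
    simpa [Matrix.IsHermitian, Matrix.conjTranspose_eq_transpose_of_trivial] using hpsd.isHermitian
  have hsym : xstar ⬝ᵥ M.mulVec x = x ⬝ᵥ M.mulVec xstar := by
    rw [Matrix.dotProduct_mulVec, ← Matrix.mulVec_transpose, hs, dotProduct_comm]
  have hx1 : x ⬝ᵥ M.mulVec xstar + β ⬝ᵥ x = 0 := by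
    rw [dotProduct_comm β, ← dotProduct_add, hstat, dotProduct_zero]
  have hx2 : xstar ⬝ᵥ M.mulVec xstar + β ⬝ᵥ xstar = 0 := by
    rw [dotProduct_comm β, ← dotProduct_add, hstat, dotProduct_zero]
  rw [Matrix.mulVec_sub, dotProduct_sub, sub_dotProduct, sub_dotProduct] at hq
  linarith
end

section
/- Let a_0, …, a_m ∈ ℝ, b_0, …, b_m ∈ ℝⁿ, c_0, …, c_m ∈ ℝ and define f_k(x) := a_k‖x‖² + 2 b_kᵀ x + c_k for k = 0, …, m. If m + 1 < n, then the set Ω₀ := {(f_0(x), …, f_m(x)) : x ∈ ℝⁿ} + int ℝ₊^{m+1} is convex. -/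
open Matrix

/-- For S-QCQP-type quadratic functionals `f k x = a k * ‖x‖² + 2 bₖᵀx + c k`
with `m + 1 < n`, the set Ω₀ is convex. -/
theorem stmt_5 (n m : ℕ) (hmn : m + 1 < n)
    (a : Fin (m + 1) → ℝ) (b : Fin (m + 1) → Fin n → ℝ) (c : Fin (m + 1) → ℝ)
    (f : Fin (m + 1) → (Fin n → ℝ) → ℝ)
    (hf : ∀ k x, f k x = a k * (x ⬝ᵥ x) + 2 * (b k ⬝ᵥ x) + c k) :
    Convex ℝ {v : Fin (m + 1) → ℝ | ∃ x : Fin n → ℝ, ∀ k, f k x < v k} := by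
  have hker : LinearMap.ker (Matrix.mulVecLin (Matrix.of b)) ≠ ⊥ := by
    apply LinearMap.ker_ne_bot_of_finrank_lt
    simpa using hmn
  obtain ⟨u, hu, hu0⟩ := Submodule.exists_mem_ne_zero_of_ne_bot hker
  have hbu : ∀ k, b k ⬝ᵥ u = 0 := fun k => congrFun (LinearMap.mem_ker.1 hu) k
  have huu : 0 < u ⬝ᵥ u := by
    have h1 : 0 ≤ u ⬝ᵥ u := Finset.sum_nonneg fun i _ => mul_self_nonneg _
    exact lt_of_le_of_ne h1 fun h => hu0 (dotProduct_self_eq_zero.1 h.symm)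
  rintro v ⟨x, hx⟩ w ⟨y, hy⟩ s t hs ht hst
  obtain ⟨z, hz⟩ : ∃ z, z = s • x + t • y := ⟨_, rfl⟩
  have hN : 0 ≤ s * (x ⬝ᵥ x) + t * (y ⬝ᵥ y) - z ⬝ᵥ z := by
    have h1 : 0 ≤ (x - y) ⬝ᵥ (x - y) := Finset.sum_nonneg fun i _ => mul_self_nonneg _
    have h2 : s * (x ⬝ᵥ x) + t * (y ⬝ᵥ y) - z ⬝ᵥ z = s * t * ((x - y) ⬝ᵥ (x - y)) := by
      obtain rfl : t = 1 - s := by linarith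
      rw [hz]
      simp only [dotProduct_add, add_dotProduct, dotProduct_sub, sub_dotProduct,
        smul_dotProduct, dotProduct_smul, smul_eq_mul, dotProduct_comm y x]
      ring
    rw [h2]; positivity
  obtain ⟨r, hr⟩ : ∃ r : ℝ, (u ⬝ᵥ u) * (r * r) + (2 * (z ⬝ᵥ u)) * r
      + -(s * (x ⬝ᵥ x) + t * (y ⬝ᵥ y) - z ⬝ᵥ z) = 0 := by
    apply exists_quadratic_eq_zero huu.ne'
    refine ⟨√(discrim _ _ _), (Real.mul_self_sqrt ?_).symm⟩
    unfold discrim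
    nlinarith [mul_nonneg huu.le hN, sq_nonneg (2 * (z ⬝ᵥ u))]
  refine ⟨z + r • u, fun k => ?_⟩
  have e1 : (z + r • u) ⬝ᵥ (z + r • u) = s * (x ⬝ᵥ x) + t * (y ⬝ᵥ y) := by
    simp only [dotProduct_add, add_dotProduct, smul_dotProduct, dotProduct_smul, smul_eq_mul,
      dotProduct_comm u z]
    linarith
  have e2 : b k ⬝ᵥ (z + r • u) = s * (b k ⬝ᵥ x) + t * (b k ⬝ᵥ y) := by
    rw [hz]
    simp [dotProduct_add, dotProduct_smul, hbu]
  have e3 : f k (z + r • u) = s * f k x + t * f k y := by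
    rw [hf, hf, hf, e1, e2]
    obtain rfl : t = 1 - s := by linarith
    ring
  rw [e3]
  simp only [Pi.add_apply, Pi.smul_apply, smul_eq_mul]
  rcases hs.eq_or_lt with h | h
  · subst h
    obtain rfl : t = 1 := by linarith
    simpa using hy k
  · have := mul_lt_mul_of_pos_left (hx k) h
    have := mul_le_mul_of_nonneg_left (hy k).le ht
    linarith
end

section
/- Consider the S-QCQP problem with m + 1 < n. Assume a global minimizer of the S-QCQP exists, assume there exists γ' ∈ ℝᵐ with γ'_k ≥ 0 for all k, γ' ≠ 0, such that a_J + Σ_{k=1}^m γ'_k a_k ≥ 0, and assume the Slater condition: there exists x₀ ∈ ℝⁿ with f_k(x₀) < 0 for all k = 1, …, m. Then a feasible point x* is a global minimizer of the S-QCQP if and only if there exist multipliers γ_1, …, γ_m ≥ 0 such that: (i) (a_J + Σ_{k=1}^m γ_k a_k) x* + (b_J + Σ_{k=1}^m γ_k b_k) = 0; (ii) γ_k f_k(x*) = 0 for k = 1, …, m; (iii) a_J + Σ_{k=1}^m γ_k a_k ≥ 0. -/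
open Matrix

lemma aux_dir (n m : ℕ) (hmn : m + 1 < n) (bJ : Fin n → ℝ) (b : Fin m → Fin n → ℝ) :
    ∃ v : Fin n → ℝ, v ≠ 0 ∧ bJ ⬝ᵥ v = 0 ∧ ∀ k, b k ⬝ᵥ v = 0 := by
  let L : (Fin n → ℝ) →ₗ[ℝ] ℝ × (Fin m → ℝ) :=
    { toFun := fun v => (bJ ⬝ᵥ v, fun k => b k ⬝ᵥ v)
      map_add' := by intro x y; ext <;> simp [dotProduct_add]
      map_smul' := by intro x y; ext <;> simp [dotProduct_smul] }
  have h : LinearMap.ker L ≠ ⊥ := by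
    apply LinearMap.ker_ne_bot_of_finrank_lt
    simp
    omega
  obtain ⟨v, hv, hv0⟩ := (Submodule.ne_bot_iff _).1 h
  have hv' : (bJ ⬝ᵥ v, fun k => b k ⬝ᵥ v) = (0 : ℝ × (Fin m → ℝ)) := hv
  refine ⟨v, hv0, congrArg Prod.fst hv', fun k => congrFun (congrArg Prod.snd hv') k⟩

lemma aux_mid (n : ℕ) (v : Fin n → ℝ) (hv : v ≠ 0) (x y : Fin n → ℝ) (s t : ℝ)
    (hs : 0 ≤ s) (ht : 0 ≤ t) (hst : s + t = 1) :
    ∃ r : ℝ, (s • x + t • y + r • v) ⬝ᵥ (s • x + t • y + r • v) =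
      s * (x ⬝ᵥ x) + t * (y ⬝ᵥ y) := by
  have hq : 0 < v ⬝ᵥ v := by
    have h1 : 0 ≤ v ⬝ᵥ v := Finset.sum_nonneg fun i _ => mul_self_nonneg _
    exact lt_of_le_of_ne h1 fun h => hv (dotProduct_self_eq_zero.1 h.symm)
  have hxy : 0 ≤ (x - y) ⬝ᵥ (x - y) := Finset.sum_nonneg fun i _ => mul_self_nonneg _
  set p := s • x + t • y with hp
  have hpp : p ⬝ᵥ p = s * (x ⬝ᵥ x) + t * (y ⬝ᵥ y) - s * t * ((x - y) ⬝ᵥ (x - y)) := by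
    have : t = 1 - s := by linarith
    simp only [hp, add_dotProduct, dotProduct_add, smul_dotProduct, dotProduct_smul,
      sub_dotProduct, dotProduct_sub, smul_eq_mul, dotProduct_comm y x]
    subst this
    ring
  set d := s * t * ((x - y) ⬝ᵥ (x - y))
  have hd : 0 ≤ d := by positivity
  set q := v ⬝ᵥ v with hqd
  set w := p ⬝ᵥ v with hw
  have hD : 0 ≤ w ^ 2 + q * d := by positivity
  refine ⟨(-w + √(w ^ 2 + q * d)) / q, ?_⟩
  have e := Real.sq_sqrt hD
  set D := √(w ^ 2 + q * d)
  simp only [add_dotProduct, dotProduct_add, smul_dotProduct, dotProduct_smul, smul_eq_mul,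
    dotProduct_comm v p, hpp, ← hw, ← hqd]
  field_simp
  linear_combination e

lemma aux_sep (m : ℕ) (T : Set (ℝ × (Fin m → ℝ))) (hT : Convex ℝ T)
    (hdisj : ∀ z ∈ T, z.1 < 0 → (∀ k, z.2 k < 0) → False)
    (hsl : ∃ z ∈ T, ∀ k, z.2 k < 0) :
    ∃ γ : Fin m → ℝ, (∀ k, 0 ≤ γ k) ∧ ∀ z ∈ T, 0 ≤ z.1 + ∑ k, γ k * z.2 k := by
  let S : Set (ℝ × (Fin m → ℝ)) := Set.Iio 0 ×ˢ Set.univ.pi fun _ => Set.Iio 0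
  have hS : ∀ z, z ∈ S ↔ z.1 < 0 ∧ ∀ k, z.2 k < 0 := by intro z; simp [S, Set.mem_prod]
  have hSo : IsOpen S := isOpen_Iio.prod (isOpen_set_pi Set.finite_univ fun _ _ => isOpen_Iio)
  have hSc : Convex ℝ S := (convex_Iio 0).prod (convex_pi fun _ _ => convex_Iio 0)
  obtain ⟨φ, u, h1, h2⟩ := geometric_hahn_banach_open hSc hSo hT
    (Set.disjoint_left.2 fun z hz hz' => hdisj z hz' ((hS z).1 hz).1 ((hS z).1 hz).2)
  have hsc : ∀ z ∈ S, ∀ t : ℝ, 0 < t → t * φ z < u := by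
    intro z hz t ht
    have : t • z ∈ S := by
      rw [hS] at hz ⊢
      exact ⟨by simpa using mul_neg_of_pos_of_neg ht hz.1,
        fun k => by simpa using mul_neg_of_pos_of_neg ht (hz.2 k)⟩
    simpa using h1 _ this
  have hneg : ∀ z ∈ S, φ z ≤ 0 := by
    intro z hz
    by_contra! h
    have := hsc z hz ((|u| + 1) / φ z) (by positivity)
    rw [div_mul_cancel₀ _ h.ne'] at this
    linarith [le_abs_self u]
  let o : ℝ × (Fin m → ℝ) := (-1, fun _ => -1)
  have ho : o ∈ S := by rw [hS]; simp [o]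
  have hu : 0 ≤ u := by
    by_contra! h
    have h3 := h1 o ho
    have h4 : φ o < 0 := h3.trans h
    have := hsc o ho (u / φ o) (div_pos_of_neg_of_neg h h4)
    rw [div_mul_cancel₀ _ h4.ne] at this
    exact lt_irrefl _ this
  have hcl : ∀ z : ℝ × (Fin m → ℝ), z.1 ≤ 0 → (∀ k, z.2 k ≤ 0) → φ z ≤ 0 := by
    intro z hz1 hz2
    by_contra! h
    have hmem : ∀ e : ℝ, 0 < e → z + e • o ∈ S := by
      intro e he
      rw [hS]
      refine ⟨?_, fun k => ?_⟩
      · simp [o]; linarith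
      · have := hz2 k
        simp [o]; linarith
    have hoo := hneg o ho
    have he : 0 < φ z / (2 * (|φ o| + 1)) := by positivity
    have h5 := hneg _ (hmem _ he)
    rw [map_add, map_smul, smul_eq_mul] at h5
    have h6 : φ z / (2 * (|φ o| + 1)) * (2 * (|φ o| + 1)) = φ z := by field_simp
    have h7 := neg_abs_le (φ o)
    nlinarith
  set g0 := φ (1, 0) with hg0
  let g : Fin m → ℝ := fun k => φ (0, Pi.single k 1)
  have hφ : ∀ z, φ z = g0 * z.1 + ∑ k, g k * z.2 k := by
    intro z
    have : z = z.1 • ((1, 0) : ℝ × (Fin m → ℝ)) +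
        ∑ k, z.2 k • ((0, Pi.single k 1) : ℝ × (Fin m → ℝ)) := by
      ext k
      · simp [Prod.fst_sum]
      · simp [Prod.snd_sum, Finset.sum_apply, Pi.single_apply]
    conv_lhs => rw [this]
    simp only [map_add, map_smul, map_sum, smul_eq_mul, g, hg0]
    simp only [mul_comm]
  have hg : ∀ k, 0 ≤ g k := by
    intro k
    have := hcl (-(0, Pi.single k 1)) (by simp) (fun j => by
      by_cases h : j = k <;> simp [Pi.single_apply, h])
    rw [map_neg] at this
    simpa [g] using this
  have hg0n : 0 ≤ g0 := by
    have := hcl (-(1, 0)) (by simp) (fun j => by simp)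
    rw [map_neg] at this
    linarith
  have hg0p : 0 < g0 := by
    refine lt_of_le_of_ne hg0n fun h => ?_
    obtain ⟨z, hz, hz2⟩ := hsl
    have h8 := h2 z hz
    have h9 := h1 (-1, z.2) ((hS _).2 ⟨by simp, hz2⟩)
    rw [hφ] at h8 h9
    rw [← h] at h8 h9
    simp only [zero_mul] at h8 h9
    linarith
  refine ⟨fun k => g k / g0, fun k => div_nonneg (hg k) hg0p.le, fun z hz => ?_⟩
  have h8 := hu.trans (h2 z hz)
  rw [hφ] at h8
  have : z.1 + ∑ k, g k / g0 * z.2 k = (g0 * z.1 + ∑ k, g k * z.2 k) / g0 := by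
    rw [add_div, mul_div_cancel_left₀ _ hg0p.ne', Finset.sum_div]
    congr 1
    exact Finset.sum_congr rfl fun k _ => by ring
  rw [this]
  positivity

lemma aux_quad (n : ℕ) (A : ℝ) (B : Fin n → ℝ) (C : ℝ) (xs v : Fin n → ℝ) (hv : v ≠ 0)
    (h0 : A * (xs ⬝ᵥ xs) + 2 * (B ⬝ᵥ xs) + C ≤ 0)
    (h : ∀ x : Fin n → ℝ, 0 ≤ A * (x ⬝ᵥ x) + 2 * (B ⬝ᵥ x) + C) :
    A • xs + B = 0 ∧ 0 ≤ A := by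
  have hk : ∀ (d : Fin n → ℝ) (t : ℝ), 0 ≤ A * (d ⬝ᵥ d) * t ^ 2 + 2 * ((A • xs + B) ⬝ᵥ d) * t := by
    intro d t
    have := h (xs + t • d)
    simp only [add_dotProduct, dotProduct_add, smul_dotProduct, dotProduct_smul, smul_eq_mul,
      dotProduct_comm d xs] at this ⊢
    nlinarith
  have hlin : ∀ d : Fin n → ℝ, (A • xs + B) ⬝ᵥ d = 0 := by
    intro d
    have hk' := hk d
    set P := A * (d ⬝ᵥ d)
    set Q := (A • xs + B) ⬝ᵥ d
    by_contra hQ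
    have h1 := hk' (-Q / (|P| + 1))
    have hp : 0 < |P| + 1 := by positivity
    have h2 : 0 ≤ P * Q ^ 2 - 2 * Q ^ 2 * (|P| + 1) := by
      have : P * Q ^ 2 - 2 * Q ^ 2 * (|P| + 1) =
        (P * (-Q / (|P| + 1)) ^ 2 + 2 * Q * (-Q / (|P| + 1))) * (|P| + 1) ^ 2 := by
        field_simp
        ring
      rw [this]; positivity
    have : 0 < Q ^ 2 := by positivity
    nlinarith [le_abs_self P, abs_nonneg P]
  constructor
  · exact dotProduct_self_eq_zero.1 (hlin _)
  · have hq : 0 < v ⬝ᵥ v := by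
      have h1 : 0 ≤ v ⬝ᵥ v := Finset.sum_nonneg fun i _ => mul_self_nonneg _
      exact lt_of_le_of_ne h1 fun h => hv (dotProduct_self_eq_zero.1 h.symm)
    have := hk v 1
    rw [hlin v] at this
    nlinarith


/-- KKT characterization of global minimizers for S-QCQP with `m + 1 < n`,
assuming a global minimizer exists, a nonzero nonnegative `γ'` with
`a_J + ∑ γ'_k a_k ≥ 0`, and the Slater condition. -/
theorem stmt_6 (n m : ℕ) (hmn : m + 1 < n)
    (aJ : ℝ) (a : Fin m → ℝ) (bJ : Fin n → ℝ) (b : Fin m → Fin n → ℝ)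
    (cJ : ℝ) (c : Fin m → ℝ)
    (J : (Fin n → ℝ) → ℝ) (f : Fin m → (Fin n → ℝ) → ℝ)
    (hJ : ∀ x, J x = aJ * (x ⬝ᵥ x) + 2 * (bJ ⬝ᵥ x) + cJ)
    (hf : ∀ k x, f k x = a k * (x ⬝ᵥ x) + 2 * (b k ⬝ᵥ x) + c k)
    (hexists : ∃ z : Fin n → ℝ, (∀ k, f k z ≤ 0) ∧
      ∀ x : Fin n → ℝ, (∀ k, f k x ≤ 0) → J z ≤ J x)
    (hγ' : ∃ γ' : Fin m → ℝ, (∀ k, 0 ≤ γ' k) ∧ γ' ≠ 0 ∧ 0 ≤ aJ + ∑ k, γ' k * a k)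
    (hslater : ∃ x₀ : Fin n → ℝ, ∀ k, f k x₀ < 0)
    (xstar : Fin n → ℝ) (hfeas : ∀ k, f k xstar ≤ 0) :
    (∀ x : Fin n → ℝ, (∀ k, f k x ≤ 0) → J xstar ≤ J x) ↔
      ∃ γ : Fin m → ℝ, (∀ k, 0 ≤ γ k) ∧
        (aJ + ∑ k, γ k * a k) • xstar + (bJ + ∑ k, γ k • b k) = 0 ∧
        (∀ k, γ k * f k xstar = 0) ∧
        0 ≤ aJ + ∑ k, γ k * a k := by
  have hL : ∀ (γ : Fin m → ℝ) (x : Fin n → ℝ), J x + ∑ k, γ k * f k x =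
      (aJ + ∑ k, γ k * a k) * (x ⬝ᵥ x) + 2 * ((bJ + ∑ k, γ k • b k) ⬝ᵥ x)
        + (cJ + ∑ k, γ k * c k) := by
    intro γ x
    simp only [hJ, hf, add_dotProduct, sum_dotProduct, smul_dotProduct, smul_eq_mul, mul_add,
      Finset.sum_add_distrib, add_mul, Finset.sum_mul, Finset.mul_sum]
    simp only [mul_left_comm, mul_assoc]
    ring
  constructor
  · intro hmin
    obtain ⟨v, hv, hvJ, hvb⟩ := aux_dir n m hmn bJ b
    let F : (Fin n → ℝ) → ℝ × (Fin m → ℝ) := fun x => (J x - J xstar, fun k => f k x)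
    have hconv : Convex ℝ (Set.range F) := by
      rintro _ ⟨x, rfl⟩ _ ⟨y, rfl⟩ s t hs ht hst
      obtain ⟨r, hr⟩ := aux_mid n v hv x y s t hs ht hst
      refine ⟨s • x + t • y + r • v, ?_⟩
      have hst' : t = 1 - s := by linarith
      ext k
      · simp only [F, Prod.fst_add, Prod.smul_fst, smul_eq_mul]
        rw [hJ (_ + _), hr, hJ x, hJ y]
        simp only [dotProduct_add, dotProduct_smul, hvJ, smul_eq_mul]
        subst hst'
        ring
      · simp only [F, Prod.snd_add, Prod.smul_snd, smul_eq_mul, Pi.add_apply, Pi.smul_apply]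
        rw [hf k (_ + _), hr, hf k x, hf k y]
        simp only [dotProduct_add, dotProduct_smul, hvb, smul_eq_mul]
        subst hst'
        ring
    obtain ⟨x₀, hx₀⟩ := hslater
    obtain ⟨γ, hγ, hpos⟩ := aux_sep m (Set.range F) hconv
      (by
        rintro _ ⟨x, rfl⟩ h1 h2
        have := hmin x fun k => (h2 k).le
        simp only [F] at h1
        linarith)
      ⟨F x₀, ⟨x₀, rfl⟩, hx₀⟩
    have hpos' : ∀ x, 0 ≤ (J x - J xstar) + ∑ k, γ k * f k x := fun x => hpos _ ⟨x, rfl⟩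
    have hterm : ∀ k ∈ Finset.univ, γ k * f k xstar ≤ 0 := fun k _ =>
      mul_nonpos_of_nonneg_of_nonpos (hγ k) (hfeas k)
    have hs0 : ∑ k, γ k * f k xstar = 0 := by
      have := hpos' xstar
      have := Finset.sum_nonpos hterm
      linarith
    have hq := aux_quad n (aJ + ∑ k, γ k * a k) (bJ + ∑ k, γ k • b k)
      (cJ + ∑ k, γ k * c k - J xstar) xstar v hv
      (by have := hL γ xstar; linarith)
      (fun x => by have := hL γ x; have := hpos' x; linarith)
    exact ⟨γ, hγ, hq.1, fun k => (Finset.sum_eq_zero_iff_of_nonpos hterm).1 hs0 k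
      (Finset.mem_univ k), hq.2⟩
  · rintro ⟨γ, hγ, hst, hcs, hA⟩ x hx
    have h1 := hL γ xstar
    have h2 := hL γ x
    rw [Finset.sum_eq_zero fun k _ => hcs k] at h1
    have h3 : ∑ k, γ k * f k x ≤ 0 := Finset.sum_nonpos fun k _ =>
      mul_nonpos_of_nonneg_of_nonpos (hγ k) (hx k)
    set A := aJ + ∑ k, γ k * a k
    have hB : bJ + ∑ k, γ k • b k = -(A • xstar) := by
      rw [eq_neg_iff_add_eq_zero, add_comm]; exact hst
    rw [hB] at h1 h2
    have h4 : 0 ≤ (x - xstar) ⬝ᵥ (x - xstar) := Finset.sum_nonneg fun i _ => mul_self_nonneg _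
    have h5 := mul_nonneg hA h4
    simp only [sub_dotProduct, dotProduct_sub, neg_dotProduct, smul_dotProduct, smul_eq_mul,
      dotProduct_comm x xstar] at h1 h2 h5
    linarith
end

section
/- Consider a diagonal QCQP, i.e. A_k = diag(α_k) with α_k ∈ ℝⁿ for k ∈ {J, 1, …, m}. Define the SDP relaxation: over pairs (x, X) ∈ ℝⁿ × Sym(n), minimize Tr(A_J X) + 2 b_Jᵀ x subject to Tr(A_k X) + 2 b_kᵀ x + c_k ≤ 0 for k = 1, …, m and X − x xᵀ positive semidefinite. Define the relaxation SDP2: over pairs (x, y) ∈ ℝⁿ × ℝⁿ, minimize α_Jᵀ y + 2 b_Jᵀ x subject to α_kᵀ y + 2 b_kᵀ x + c_k ≤ 0 for k = 1, …, m and x_i² ≤ y_i for i = 1, …, n. Then the set of objective values attained over the SDP feasible set equals the set of objective values attained over the SDP2 feasible set; in particular the optimal values (infima) of SDP and SDP2 coincide. -/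
open Matrix

/-- For a diagonal QCQP (`A_k = diag(α_k)`), the set of objective values attained
over the feasible set of the Shor SDP relaxation equals the set of objective values
attained over the feasible set of the relaxation SDP2; in particular the two
optimal values (infima) coincide. -/
theorem stmt_7 (n m : ℕ)
    (αJ : Fin n → ℝ) (α : Fin m → Fin n → ℝ)
    (bJ : Fin n → ℝ) (b : Fin m → Fin n → ℝ) (cJ : ℝ) (c : Fin m → ℝ) :
    ({t : ℝ | ∃ (x : Fin n → ℝ) (X : Matrix (Fin n) (Fin n) ℝ), X.IsSymm ∧
        (∀ k, (Matrix.diagonal (α k) * X).trace + 2 * (b k ⬝ᵥ x) + c k ≤ 0) ∧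
        (X - Matrix.vecMulVec x x).PosSemidef ∧
        t = (Matrix.diagonal αJ * X).trace + 2 * (bJ ⬝ᵥ x)}
      = {t : ℝ | ∃ x y : Fin n → ℝ,
        (∀ k, α k ⬝ᵥ y + 2 * (b k ⬝ᵥ x) + c k ≤ 0) ∧
        (∀ i, (x i) ^ 2 ≤ y i) ∧
        t = αJ ⬝ᵥ y + 2 * (bJ ⬝ᵥ x)}) ∧
    sInf {t : ℝ | ∃ (x : Fin n → ℝ) (X : Matrix (Fin n) (Fin n) ℝ), X.IsSymm ∧
        (∀ k, (Matrix.diagonal (α k) * X).trace + 2 * (b k ⬝ᵥ x) + c k ≤ 0) ∧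
        (X - Matrix.vecMulVec x x).PosSemidef ∧
        t = (Matrix.diagonal αJ * X).trace + 2 * (bJ ⬝ᵥ x)}
      = sInf {t : ℝ | ∃ x y : Fin n → ℝ,
        (∀ k, α k ⬝ᵥ y + 2 * (b k ⬝ᵥ x) + c k ≤ 0) ∧
        (∀ i, (x i) ^ 2 ≤ y i) ∧
        t = αJ ⬝ᵥ y + 2 * (bJ ⬝ᵥ x)} := by
  have key : ∀ (a : Fin n → ℝ) (X : Matrix (Fin n) (Fin n) ℝ),
      (Matrix.diagonal a * X).trace = a ⬝ᵥ (fun i => X i i) := by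
    intro a X
    simp [Matrix.trace, dotProduct, Matrix.diagonal_mul]
  refine (fun h => ⟨h, congrArg sInf h⟩) ?_
  ext t
  simp only [Set.mem_setOf_eq, key]
  constructor
  · rintro ⟨x, X, -, h, hp, ht⟩
    refine ⟨x, fun i => X i i, h, fun i => ?_, ht⟩
    have h2 := hp.diag_nonneg (i := i)
    simp only [Matrix.sub_apply, Matrix.vecMulVec_apply] at h2
    nlinarith
  · rintro ⟨x, y, h, hy, ht⟩
    have hd : (fun i => (Matrix.diagonal (fun i => y i - x i ^ 2) + Matrix.vecMulVec x x) i i)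
        = y := by
      funext i
      simp [Matrix.vecMulVec_apply]
      ring
    refine ⟨x, Matrix.diagonal (fun i => y i - x i ^ 2) + Matrix.vecMulVec x x, ?_, ?_, ?_, ?_⟩
    · ext i j
      simp only [Matrix.transpose_apply, Matrix.add_apply, Matrix.vecMulVec_apply]
      rw [mul_comm (x j)]
      by_cases hij : i = j
      · subst hij; rfl
      · rw [Matrix.diagonal_apply_ne _ hij, Matrix.diagonal_apply_ne _ (Ne.symm hij)]
    · rw [hd]; exact h
    · rw [add_sub_cancel_right]
      exact Matrix.PosSemidef.diagonal (fun i => sub_nonneg.mpr (hy i))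
    · rw [hd]; exact ht
end

section
/- Consider problem (P1) with two constraints and n > 3. Assume: (a) there exists x₀ with g_1(x₀) < 0 and g_2(x₀) < 0 (Slater condition); (b) the zero vector is not feasible, i.e. g_1(0) > 0 or g_2(0) > 0; (c) there is no KKT point (x, γ_1, γ_2) with γ_1 > 0 and γ_2 = 0; (d) there is no KKT point (x, γ_1, γ_2) with γ_1 = 0 and γ_2 > 0. Then there exists a KKT point (x*, γ_1, γ_2) of (P1) with γ_1 > 0 and γ_2 > 0. -/
open Matrix

/-- KKT point of problem (P1): `x` with multipliers `γ₁, γ₂ ≥ 0` satisfying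
stationarity, complementarity, dual feasibility and primal feasibility, where
`g_k x = a_k ‖x‖² + b_kᵀ x + c_k` and `w = 1 + 2γ₁a₁ + 2γ₂a₂`. -/
def IsKKTP1 (n : ℕ) (a1 a2 : ℝ) (b1 b2 : Fin n → ℝ) (c1 c2 : ℝ)
    (x : Fin n → ℝ) (γ1 γ2 : ℝ) : Prop :=
  0 ≤ γ1 ∧ 0 ≤ γ2 ∧
  (1 + 2 * γ1 * a1 + 2 * γ2 * a2) • x = -(γ1 • b1 + γ2 • b2) ∧
  γ1 * (a1 * (x ⬝ᵥ x) + b1 ⬝ᵥ x + c1) = 0 ∧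
  γ2 * (a2 * (x ⬝ᵥ x) + b2 ⬝ᵥ x + c2) = 0 ∧
  0 ≤ 1 + 2 * γ1 * a1 + 2 * γ2 * a2 ∧
  a1 * (x ⬝ᵥ x) + b1 ⬝ᵥ x + c1 ≤ 0 ∧
  a2 * (x ⬝ᵥ x) + b2 ⬝ᵥ x + c2 ≤ 0

lemma exists_orth (n : ℕ) (hn : 3 < n) (u v m : Fin n → ℝ) :
    ∃ e : Fin n → ℝ, e ≠ 0 ∧ u ⬝ᵥ e = 0 ∧ v ⬝ᵥ e = 0 ∧ m ⬝ᵥ e = 0 := by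
  have h : LinearMap.ker (Matrix.mulVecLin (Matrix.of ![u, v, m])) ≠ ⊥ := by
    apply LinearMap.ker_ne_bot_of_finrank_lt
    simpa using hn
  obtain ⟨e, he, hne⟩ := (Submodule.ne_bot_iff _).1 h
  rw [LinearMap.mem_ker, Matrix.mulVecLin_apply] at he
  exact ⟨e, hne, congrFun he 0, congrFun he 1, congrFun he 2⟩

lemma dot_pos {n : ℕ} {e : Fin n → ℝ} (h : e ≠ 0) : 0 < e ⬝ᵥ e := by
  have h0 : 0 ≤ e ⬝ᵥ e := Finset.sum_nonneg fun i _ => mul_self_nonneg _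
  exact lt_of_le_of_ne h0 fun h' => h (dotProduct_self_eq_zero.1 h'.symm)

lemma dot_nonneg {n : ℕ} (e : Fin n → ℝ) : 0 ≤ e ⬝ᵥ e :=
  Finset.sum_nonneg fun i _ => mul_self_nonneg _

lemma conv_pt (n : ℕ) (hn : 3 < n) (b1 b2 x y : Fin n → ℝ) (s t : ℝ) (hs : 0 ≤ s)
    (ht : 0 ≤ t) (hst : s + t = 1) :
    ∃ z : Fin n → ℝ, z ⬝ᵥ z = s * (x ⬝ᵥ x) + t * (y ⬝ᵥ y) ∧
      b1 ⬝ᵥ z = s * (b1 ⬝ᵥ x) + t * (b1 ⬝ᵥ y) ∧ b2 ⬝ᵥ z = s * (b2 ⬝ᵥ x) + t * (b2 ⬝ᵥ y) := by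
  obtain ⟨e, he, h1, h2, h3⟩ := exists_orth n hn b1 b2 (s • x + t • y)
  have hp := dot_pos he
  have hxy := dot_nonneg (x - y)
  have hq : 0 ≤ s * t * ((x - y) ⬝ᵥ (x - y)) / (e ⬝ᵥ e) := by positivity
  have hr := Real.mul_self_sqrt hq
  set r := Real.sqrt (s * t * ((x - y) ⬝ᵥ (x - y)) / (e ⬝ᵥ e))
  rw [eq_div_iff hp.ne'] at hr
  refine ⟨(s • x + t • y) + r • e, ?_, ?_, ?_⟩
  · have h3' : e ⬝ᵥ (s • x + t • y) = 0 := by rw [dotProduct_comm]; exact h3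
    generalize hm : s • x + t • y = m at h3 h3'
    rw [add_dotProduct, dotProduct_add, dotProduct_add, dotProduct_smul, h3, smul_dotProduct,
      h3', smul_dotProduct, dotProduct_smul]
    subst hm
    simp only [smul_eq_mul, mul_zero, zero_add, add_zero]
    rw [← mul_assoc, hr]
    have hc := dotProduct_comm x y
    simp only [add_dotProduct, dotProduct_add, sub_dotProduct, dotProduct_sub, dotProduct_smul,
      smul_dotProduct, smul_eq_mul]
    rw [← hc]
    obtain rfl : t = 1 - s := by linarith
    ring
  · simp [dotProduct_add, dotProduct_smul, h1]
  · simp [dotProduct_add, dotProduct_smul, h2]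

lemma exists_min (n : ℕ) (g1 g2 : (Fin n → ℝ) → ℝ) (h1 : Continuous g1) (h2 : Continuous g2)
    (x₀ : Fin n → ℝ) (hx1 : g1 x₀ ≤ 0) (hx2 : g2 x₀ ≤ 0) :
    ∃ x, g1 x ≤ 0 ∧ g2 x ≤ 0 ∧ ∀ y, g1 y ≤ 0 → g2 y ≤ 0 → x ⬝ᵥ x ≤ y ⬝ᵥ y := by
  have hcd : Continuous fun x : Fin n → ℝ => x ⬝ᵥ x := by fun_prop
  set R := x₀ ⬝ᵥ x₀ with hR
  let K : Set (Fin n → ℝ) := {x | g1 x ≤ 0 ∧ g2 x ≤ 0 ∧ x ⬝ᵥ x ≤ R}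
  have hK : IsClosed K := (isClosed_le h1 continuous_const).inter
    ((isClosed_le h2 continuous_const).inter (isClosed_le hcd continuous_const))
  have hKc : IsCompact K := by
    apply (isCompact_closedBall (0 : Fin n → ℝ) (R + 1)).of_isClosed_subset hK
    rintro x ⟨-, -, hx⟩
    have hR0 : 0 ≤ R := dot_nonneg _
    rw [mem_closedBall_zero_iff, pi_norm_le_iff_of_nonneg (by linarith)]
    intro i
    have : x i * x i ≤ x ⬝ᵥ x :=
      Finset.single_le_sum (f := fun i => x i * x i) (fun j _ => mul_self_nonneg _)
        (Finset.mem_univ i)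
    rw [Real.norm_eq_abs]
    apply abs_le_of_sq_le_sq _ (by linarith)
    nlinarith
  obtain ⟨x, hx, hmin⟩ := hKc.exists_isMinOn ⟨x₀, hx1, hx2, le_rfl⟩ hcd.continuousOn
  refine ⟨x, hx.1, hx.2.1, fun y hy1 hy2 => ?_⟩
  by_cases hy : y ⬝ᵥ y ≤ R
  · exact hmin ⟨hy1, hy2, hy⟩
  · exact hx.2.2.trans (not_le.1 hy).le

lemma le_zero_aux {a b : ℝ} (h : ∀ N : ℝ, 0 < N → a + N * b < 0) : b ≤ 0 := by
  by_contra hb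
  push Not at hb
  have := h ((|a| + 1) / b) (by positivity)
  rw [div_mul_cancel₀ _ hb.ne'] at this
  linarith [neg_abs_le a]

lemma le_zero_aux2 {a b : ℝ} (h : ∀ N : ℝ, 0 < N → a + N * b < 0) : a ≤ 0 := by
  by_contra ha
  push Not at ha
  have := h (a / (|b| + 1)) (by positivity)
  have h2 : a / (|b| + 1) * (|b| + 1) = a := div_mul_cancel₀ _ (by positivity)
  have h3 : 0 < a / (|b| + 1) := by positivity
  nlinarith [neg_abs_le b]

lemma multipliers {E : Type*} (J g1 g2 : E → ℝ)
    (hconv : ∀ x y (s t : ℝ), 0 ≤ s → 0 ≤ t → s + t = 1 → ∃ z, J z = s * J x + t * J y ∧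
      g1 z = s * g1 x + t * g1 y ∧ g2 z = s * g2 x + t * g2 y)
    (x₀ : E) (h01 : g1 x₀ < 0) (h02 : g2 x₀ < 0)
    (hmin : ∀ x, g1 x ≤ 0 → g2 x ≤ 0 → 0 ≤ J x) :
    ∃ γ1 γ2 : ℝ, 0 ≤ γ1 ∧ 0 ≤ γ2 ∧ ∀ x, 0 ≤ J x + γ1 * g1 x + γ2 * g2 x := by
  let A : Set (ℝ × ℝ × ℝ) := {p | ∃ x, J x < p.1 ∧ g1 x < p.2.1 ∧ g2 x < p.2.2}
  have hAo : IsOpen A := by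
    have : A = ⋃ x, {p | J x < p.1 ∧ g1 x < p.2.1 ∧ g2 x < p.2.2} := by
      ext p; simp [A]
    rw [this]
    refine isOpen_iUnion fun x => ?_
    exact (isOpen_lt continuous_const continuous_fst).inter
      ((isOpen_lt continuous_const (continuous_fst.comp continuous_snd)).inter
        (isOpen_lt continuous_const (continuous_snd.comp continuous_snd)))
  have hAc : Convex ℝ A := by
    rintro p ⟨x, hx0, hx1, hx2⟩ q ⟨y, hy0, hy1, hy2⟩ s t hs ht hst
    obtain ⟨z, hz0, hz1, hz2⟩ := hconv x y s t hs ht hst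
    have key : ∀ a b c d : ℝ, a < c → b < d → s * a + t * b < s * c + t * d := by
      intro a b c d h h'
      rcases hs.eq_or_lt with h0 | h0
      · subst h0
        have : t = 1 := by linarith
        subst this; linarith
      · nlinarith
    refine ⟨z, ?_, ?_, ?_⟩
    · rw [hz0]; simpa using key _ _ _ _ hx0 hy0
    · rw [hz1]; simpa using key _ _ _ _ hx1 hy1
    · rw [hz2]; simpa using key _ _ _ _ hx2 hy2
  have h0A : (0 : ℝ × ℝ × ℝ) ∉ A := by
    rintro ⟨x, h0, h1, h2⟩
    exact absurd (hmin x h1.le h2.le) (not_le.2 h0)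
  obtain ⟨f, hf⟩ := geometric_hahn_banach_open_point hAc hAo h0A
  set α := f (1, 0, 0) with hα
  set β := f (0, 1, 0) with hβ
  set δ := f (0, 0, 1) with hδ
  have hfe : ∀ p q r : ℝ, f (p, q, r) = p * α + q * β + r * δ := by
    intro p q r
    have : ((p, q, r) : ℝ × ℝ × ℝ) = p • (1, 0, 0) + q • (0, 1, 0) + r • (0, 0, 1) := by
      simp
    rw [this, map_add, map_add, map_smul, map_smul, map_smul]
    simp only [smul_eq_mul, hα, hβ, hδ]
  have hA : ∀ x p q r, 0 < p → 0 < q → 0 < r →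
      (J x + p) * α + (g1 x + q) * β + (g2 x + r) * δ < 0 := by
    intro x p q r hp hq hr
    rw [← hfe]
    have := hf (J x + p, g1 x + q, g2 x + r) ⟨x, by simpa, by simpa, by simpa⟩
    simpa using this
  have hα0 : α ≤ 0 := le_zero_aux (a := J x₀ * α + (g1 x₀ + 1) * β + (g2 x₀ + 1) * δ)
    fun N hN => by linarith [hA x₀ N 1 1 hN one_pos one_pos]
  have hβ0 : β ≤ 0 := le_zero_aux (a := (J x₀ + 1) * α + (g1 x₀) * β + (g2 x₀ + 1) * δ)
    fun N hN => by linarith [hA x₀ 1 N 1 one_pos hN one_pos]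
  have hδ0 : δ ≤ 0 := le_zero_aux (a := (J x₀ + 1) * α + (g1 x₀ + 1) * β + (g2 x₀) * δ)
    fun N hN => by linarith [hA x₀ 1 1 N one_pos one_pos hN]
  have hL : ∀ x, J x * α + g1 x * β + g2 x * δ ≤ 0 := fun x =>
    le_zero_aux2 (b := α + β + δ) fun N hN => by linarith [hA x N N N hN hN hN]
  have hαn : α < 0 := by
    refine lt_of_le_of_ne hα0 fun h => ?_
    have h1 := hA x₀ 1 (-g1 x₀) (-g2 x₀) one_pos (by linarith) (by linarith)
    rw [h] at h1
    linarith
  refine ⟨β / α, δ / α, div_nonneg_of_nonpos hβ0 hα0, div_nonneg_of_nonpos hδ0 hα0, fun x => ?_⟩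
  have : J x + β / α * g1 x + δ / α * g2 x = (J x * α + g1 x * β + g2 x * δ) / α := by
    have := hαn.ne
    field_simp
  rw [this]
  exact div_nonneg_of_nonpos (hL x) hα0

lemma stationary (n : ℕ) (hn : 3 < n) (w : ℝ) (d x : Fin n → ℝ)
    (h : ∀ y, w / 2 * (x ⬝ᵥ x) + d ⬝ᵥ x ≤ w / 2 * (y ⬝ᵥ y) + d ⬝ᵥ y) :
    w • x = -d ∧ 0 ≤ w := by
  have key : ∀ (t : ℝ) v, 0 ≤ t * ((w • x + d) ⬝ᵥ v) + t ^ 2 * (w / 2) * (v ⬝ᵥ v) := by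
    intro t v
    have := h (x + t • v)
    have hc := dotProduct_comm v x
    simp only [add_dotProduct, dotProduct_add, dotProduct_smul,
      smul_dotProduct, smul_eq_mul, hc] at this ⊢
    linarith
  have hq : w • x + d = 0 := by
    by_contra hne
    have hp := dot_pos hne
    rcases le_or_gt w 0 with hw | hw
    · have := key (-1) (w • x + d)
      nlinarith
    · have := key (-1 / w) (w • x + d)
      set Q := (w • x + d) ⬝ᵥ (w • x + d)
      have h2 : -1 / w * Q + (-1 / w) ^ 2 * (w / 2) * Q = - (Q / (2 * w)) := by
        field_simp; ring
      have : 0 < Q / (2 * w) := by positivity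
      linarith
  refine ⟨eq_neg_of_add_eq_zero_left hq, ?_⟩
  obtain ⟨e, he, -⟩ := exists_orth n hn 0 0 0
  have hp := dot_pos he
  have := key 1 e
  rw [hq, zero_dotProduct] at this
  by_contra hw
  push Not at hw
  nlinarith

/-- If the Slater condition holds, the zero vector is infeasible, and there is no
KKT point of (P1) with exactly one positive multiplier, then there is a KKT point
with both multipliers positive. -/
theorem stmt_12 (n : ℕ) (hn : 3 < n) (a1 a2 : ℝ) (b1 b2 : Fin n → ℝ) (c1 c2 : ℝ)
    (g1 g2 : (Fin n → ℝ) → ℝ)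
    (hg1 : ∀ x, g1 x = a1 * (x ⬝ᵥ x) + b1 ⬝ᵥ x + c1)
    (hg2 : ∀ x, g2 x = a2 * (x ⬝ᵥ x) + b2 ⬝ᵥ x + c2)
    (hslater : ∃ x₀ : Fin n → ℝ, g1 x₀ < 0 ∧ g2 x₀ < 0)
    (hzero : 0 < g1 0 ∨ 0 < g2 0)
    (hno1 : ¬ ∃ (x : Fin n → ℝ) (γ1 γ2 : ℝ),
      IsKKTP1 n a1 a2 b1 b2 c1 c2 x γ1 γ2 ∧ 0 < γ1 ∧ γ2 = 0)
    (hno2 : ¬ ∃ (x : Fin n → ℝ) (γ1 γ2 : ℝ),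
      IsKKTP1 n a1 a2 b1 b2 c1 c2 x γ1 γ2 ∧ γ1 = 0 ∧ 0 < γ2) :
    ∃ (x : Fin n → ℝ) (γ1 γ2 : ℝ),
      IsKKTP1 n a1 a2 b1 b2 c1 c2 x γ1 γ2 ∧ 0 < γ1 ∧ 0 < γ2 := by
  obtain ⟨x₀, h01, h02⟩ := hslater
  have hc1 : Continuous g1 := by
    rw [funext hg1]; fun_prop
  have hc2 : Continuous g2 := by
    rw [funext hg2]; fun_prop
  obtain ⟨x, hx1, hx2, hmin⟩ := exists_min n g1 g2 hc1 hc2 x₀ h01.le h02.le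
  obtain ⟨γ1, γ2, hγ1, hγ2, hL⟩ := multipliers (fun y => 1 / 2 * (y ⬝ᵥ y) - 1 / 2 * (x ⬝ᵥ x)) g1 g2
    (by
      intro u v s t hs ht hst
      obtain ⟨z, hz0, hz1, hz2⟩ := conv_pt n hn b1 b2 u v s t hs ht hst
      refine ⟨z, ?_, ?_, ?_⟩
      · simp only [hz0]
        obtain rfl : t = 1 - s := by linarith
        ring
      · simp only [hg1, hz0, hz1]
        obtain rfl : t = 1 - s := by linarith
        ring
      · simp only [hg2, hz0, hz2]
        obtain rfl : t = 1 - s := by linarith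
        ring) x₀ h01 h02
    (fun y hy1 hy2 => by have := hmin y hy1 hy2; linarith)
  have hLx := hL x
  have hm1 : γ1 * g1 x ≤ 0 := mul_nonpos_of_nonneg_of_nonpos hγ1 hx1
  have hm2 : γ2 * g2 x ≤ 0 := mul_nonpos_of_nonneg_of_nonpos hγ2 hx2
  have he1 : γ1 * g1 x = 0 := by linarith
  have he2 : γ2 * g2 x = 0 := by linarith
  obtain ⟨hs, hw⟩ := stationary n hn (1 + 2 * γ1 * a1 + 2 * γ2 * a2) (γ1 • b1 + γ2 • b2) x (by
    intro y
    have h1 := hL y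
    rw [hg1] at he1 h1
    rw [hg2] at he2 h1
    simp only [add_dotProduct, smul_dotProduct, smul_eq_mul]
    linarith)
  have hK : IsKKTP1 n a1 a2 b1 b2 c1 c2 x γ1 γ2 :=
    ⟨hγ1, hγ2, hs, hg1 x ▸ he1, hg2 x ▸ he2, hw, hg1 x ▸ hx1, hg2 x ▸ hx2⟩
  rcases hγ1.eq_or_lt with h1 | h1
  · rcases hγ2.eq_or_lt with h2 | h2
    · subst h1; subst h2
      have : x = 0 := by simpa using hs
      subst this
      rcases hzero with h | h <;> linarith
    · exact absurd ⟨x, γ1, γ2, hK, h1.symm, h2⟩ hno2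
  · rcases hγ2.eq_or_lt with h2 | h2
    · exact absurd ⟨x, γ1, γ2, hK, h1, h2.symm⟩ hno1
    · exact ⟨x, γ1, γ2, hK, h1, h2⟩
end

section
/- Consider problem (P1) with two constraints, n > 3, the zero vector not feasible, a_1 ≠ 0, and b_1, b_2 linearly independent. Let γ_1 > 0, γ_2 > 0, set w := 1 + 2γ_1 a_1 + 2γ_2 a_2, s := γ_1 b_1 + γ_2 b_2, and x* := −(1/w)·s. Suppose w > 0 and that (γ_1, γ_2) solves the system: (1) (1/w²)‖s‖² = (1/(a_1 w)) b_1ᵀ s − c_1/a_1; and (2) if a_2 ≠ 0 then (1/(a_1 w)) b_1ᵀ s − c_1/a_1 = (1/(a_2 w)) b_2ᵀ s − c_2/a_2, while if a_2 = 0 then (1/w) b_2ᵀ s = c_2. Then x* is a global minimizer of (P1). -/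
open Matrix

/-- Problem (P1), both constraints active: with `n > 3`, zero infeasible, `a₁ ≠ 0`,
`b₁, b₂` linearly independent, `γ₁, γ₂ > 0`, `w := 1 + 2γ₁a₁ + 2γ₂a₂ > 0`,
`s := γ₁b₁ + γ₂b₂` and `x* := −(1/w)·s`, if `(γ₁, γ₂)` solves the system (1)–(2)
then `x*` is a global minimizer of (P1). -/
theorem stmt_13 (n : ℕ) (hn : 3 < n) (a1 a2 : ℝ) (b1 b2 : Fin n → ℝ) (c1 c2 : ℝ)
    (g1 g2 : (Fin n → ℝ) → ℝ)
    (hg1 : ∀ x, g1 x = a1 * (x ⬝ᵥ x) + b1 ⬝ᵥ x + c1)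
    (hg2 : ∀ x, g2 x = a2 * (x ⬝ᵥ x) + b2 ⬝ᵥ x + c2)
    (hzero : 0 < g1 0 ∨ 0 < g2 0)
    (ha1 : a1 ≠ 0)
    (hind : LinearIndependent ℝ ![b1, b2])
    (γ1 γ2 : ℝ) (hγ1 : 0 < γ1) (hγ2 : 0 < γ2)
    (w : ℝ) (hw : w = 1 + 2 * γ1 * a1 + 2 * γ2 * a2) (hwpos : 0 < w)
    (s : Fin n → ℝ) (hs : s = γ1 • b1 + γ2 • b2)
    (xstar : Fin n → ℝ) (hx : xstar = -((1 / w) • s))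
    (heq1 : (1 / w ^ 2) * (s ⬝ᵥ s) = (1 / (a1 * w)) * (b1 ⬝ᵥ s) - c1 / a1)
    (heq2 : (a2 ≠ 0 →
        (1 / (a1 * w)) * (b1 ⬝ᵥ s) - c1 / a1 = (1 / (a2 * w)) * (b2 ⬝ᵥ s) - c2 / a2) ∧
      (a2 = 0 → (1 / w) * (b2 ⬝ᵥ s) = c2)) :
    g1 xstar ≤ 0 ∧ g2 xstar ≤ 0 ∧
      ∀ x : Fin n → ℝ, g1 x ≤ 0 → g2 x ≤ 0 →
        (1 / 2) * (xstar ⬝ᵥ xstar) ≤ (1 / 2) * (x ⬝ᵥ x) := by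
  have hw0 : w ≠ 0 := hwpos.ne'
  have hxx : xstar ⬝ᵥ xstar = (1 / w ^ 2) * (s ⬝ᵥ s) := by
    rw [hx]
    simp only [neg_dotProduct, dotProduct_neg, smul_dotProduct, dotProduct_smul, smul_eq_mul]
    field_simp
  have hbx : ∀ b : Fin n → ℝ, b ⬝ᵥ xstar = -((1 / w) * (b ⬝ᵥ s)) := by
    intro b
    rw [hx]
    simp only [dotProduct_neg, dotProduct_smul, smul_eq_mul]
  have h1 : g1 xstar = 0 := by
    rw [hg1, hxx, hbx, heq1]
    field_simp
    ring
  have h2 : g2 xstar = 0 := by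
    rw [hg2, hxx, hbx]
    by_cases ha2 : a2 = 0
    · rw [heq2.2 ha2, ha2]
      ring
    · rw [heq1, heq2.1 ha2]
      field_simp
      ring
  refine ⟨h1.le, h2.le, fun x hx1 hx2 => ?_⟩
  have hsy : ∀ y : Fin n → ℝ, s ⬝ᵥ y = γ1 * (b1 ⬝ᵥ y) + γ2 * (b2 ⬝ᵥ y) := by
    intro y
    rw [hs]
    simp only [add_dotProduct, smul_dotProduct, smul_eq_mul]
  have hws : s = -(w • xstar) := by
    rw [hx, smul_neg, neg_neg, smul_smul, mul_one_div_cancel hw0, one_smul]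
  have e1 : s ⬝ᵥ x = -(w * (xstar ⬝ᵥ x)) := by
    conv_lhs => rw [hws]
    simp only [neg_dotProduct, smul_dotProduct, smul_eq_mul]
  have e2 : s ⬝ᵥ xstar = -(w * (xstar ⬝ᵥ xstar)) := by
    conv_lhs => rw [hws]
    simp only [neg_dotProduct, smul_dotProduct, smul_eq_mul]
  have hsq : 0 ≤ (x - xstar) ⬝ᵥ (x - xstar) := by
    simp only [dotProduct]
    exact Finset.sum_nonneg fun i _ => mul_self_nonneg _
  rw [sub_dotProduct, dotProduct_sub, dotProduct_sub, dotProduct_comm x xstar] at hsq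
  have k := mul_nonneg hwpos.le hsq
  have m1 := mul_nonneg hγ1.le (neg_nonneg.2 hx1)
  have m2 := mul_nonneg hγ2.le (neg_nonneg.2 hx2)
  have z1 : γ1 * g1 xstar = 0 := by rw [h1, mul_zero]
  have z2 : γ2 * g2 xstar = 0 := by rw [h2, mul_zero]
  rw [hg1] at m1 z1
  rw [hg2] at m2 z2
  rw [hsy] at e1 e2
  generalize xstar ⬝ᵥ x = u at *
  generalize xstar ⬝ᵥ xstar = v at *
  generalize x ⬝ᵥ x = X at *
  subst hw
  linarith
end

section
/- Let b_0, …, b_m ∈ ℝⁿ with m + 1 < n, let x_v, x_w ∈ ℝⁿ be distinct, and let λ ∈ (0, 1). Then there exists x̃ ∈ ℝⁿ such that ‖x̃‖² = λ‖x_v‖² + (1 − λ)‖x_w‖² and b_kᵀ x̃ = b_kᵀ(λ x_v + (1 − λ) x_w) for all k = 0, …, m. -/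
open Matrix

/-- Given `b₀, …, b_m ∈ ℝⁿ` with `m + 1 < n`, distinct `x_v, x_w ∈ ℝⁿ` and
`λ ∈ (0, 1)`, there is `x̃` with `‖x̃‖² = λ‖x_v‖² + (1−λ)‖x_w‖²` and
`b_kᵀ x̃ = b_kᵀ(λ x_v + (1−λ) x_w)` for all `k`. -/
theorem stmt_15 (n m : ℕ) (hmn : m + 1 < n) (b : Fin (m + 1) → Fin n → ℝ)
    (xv xw : Fin n → ℝ) (hne : xv ≠ xw) (l : ℝ) (hl : l ∈ Set.Ioo (0 : ℝ) 1) :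
    ∃ xt : Fin n → ℝ,
      xt ⬝ᵥ xt = l * (xv ⬝ᵥ xv) + (1 - l) * (xw ⬝ᵥ xw) ∧
      ∀ k, b k ⬝ᵥ xt = b k ⬝ᵥ (l • xv + (1 - l) • xw) := by
  obtain ⟨hl0, hl1⟩ := hl
  obtain ⟨d, hd0, hd⟩ : ∃ d : Fin n → ℝ, d ≠ 0 ∧ ∀ k, b k ⬝ᵥ d = 0 := by
    have h := LinearMap.ker_ne_bot_of_finrank_lt (f := Matrix.mulVecLin (Matrix.of b)) (by simpa using hmn)
    obtain ⟨d, hd, h0⟩ := (Submodule.ne_bot_iff _).1 h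
    refine ⟨d, h0, fun k => ?_⟩
    have := congrFun (LinearMap.mem_ker.1 hd) k
    simpa [Matrix.mulVec] using this
  set c := l • xv + (1 - l) • xw with hc
  have hq : d ⬝ᵥ d ≠ 0 := fun h => hd0 (dotProduct_self_eq_zero.1 h)
  have nn : ∀ x : Fin n → ℝ, 0 ≤ x ⬝ᵥ x := fun x =>
    Finset.sum_nonneg fun i _ => mul_self_nonneg (x i)
  have hcc : c ⬝ᵥ c = l * (xv ⬝ᵥ xv) + (1 - l) * (xw ⬝ᵥ xw)
      - l * (1 - l) * ((xv - xw) ⬝ᵥ (xv - xw)) := by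
    simp only [hc, add_dotProduct, dotProduct_add, sub_dotProduct, dotProduct_sub,
      smul_dotProduct, dotProduct_smul, smul_eq_mul, dotProduct_comm xw xv]
    ring
  have hs : 0 ≤ l * (1 - l) * ((xv - xw) ⬝ᵥ (xv - xw)) :=
    mul_nonneg (mul_nonneg hl0.le (by linarith)) (nn _)
  generalize l * (1 - l) * ((xv - xw) ⬝ᵥ (xv - xw)) = s at hcc hs
  have hr := Real.sq_sqrt (add_nonneg (sq_nonneg (c ⬝ᵥ d)) (mul_nonneg (nn d) hs))
  generalize Real.sqrt _ = r at hr
  refine ⟨c + ((r - c ⬝ᵥ d) / (d ⬝ᵥ d)) • d, ?_, fun k => by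
    simp [dotProduct_add, dotProduct_smul, hd]⟩
  simp only [add_dotProduct, dotProduct_add,
      smul_dotProduct, dotProduct_smul, smul_eq_mul, dotProduct_comm d c]
  have : l * (xv ⬝ᵥ xv) + (1 - l) * (xw ⬝ᵥ xw) = c ⬝ᵥ c + s := by linarith
  rw [this]
  generalize d ⬝ᵥ d = q at *
  generalize c ⬝ᵥ d = p at *
  field_simp
  linear_combination hr
end

section
/- Consider the S-QCQP problem and its relaxation SDP2. Suppose (x̄, ȳ) ∈ ℝⁿ × ℝⁿ is feasible for SDP2 and there exist multipliers γ_1, …, γ_m ≥ 0 such that, with ν := a_J + Σ_{k=1}^m γ_k a_k: (i) b_{J,i} + Σ_{k=1}^m γ_k b_{k,i} + ν · x̄_i = 0 for every i = 1, …, n; (ii) γ_k (a_k Σ_{i=1}^n ȳ_i + 2 b_kᵀ x̄ + c_k) = 0 for every k = 1, …, m; (iii) ν · (x̄_i² − ȳ_i) = 0 for every i = 1, …, n; and suppose ν > 0. Then ȳ_i = x̄_i² for all i, x̄ is feasible for the S-QCQP, and x̄ is a global minimizer of the S-QCQP; in particular SDP2 is exact. -/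
open Matrix

/-- If `(x̄, ȳ)` is feasible for the relaxation SDP2 of an S-QCQP and satisfies the
KKT conditions of SDP2 with multipliers `γ_k ≥ 0` and `ν := a_J + ∑ γ_k a_k > 0`,
then `ȳ_i = x̄_i²` for all `i`, `x̄` is feasible for the S-QCQP, and `x̄` is a global
minimizer of the S-QCQP; in particular SDP2 is exact. -/
theorem stmt_18 (n m : ℕ)
    (aJ : ℝ) (a : Fin m → ℝ) (bJ : Fin n → ℝ) (b : Fin m → Fin n → ℝ)
    (cJ : ℝ) (c : Fin m → ℝ)
    (J : (Fin n → ℝ) → ℝ) (f : Fin m → (Fin n → ℝ) → ℝ)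
    (hJ : ∀ x, J x = aJ * (x ⬝ᵥ x) + 2 * (bJ ⬝ᵥ x) + cJ)
    (hf : ∀ k x, f k x = a k * (x ⬝ᵥ x) + 2 * (b k ⬝ᵥ x) + c k)
    (xbar ybar : Fin n → ℝ)
    (hfeas1 : ∀ k, a k * (∑ i, ybar i) + 2 * (b k ⬝ᵥ xbar) + c k ≤ 0)
    (hfeas2 : ∀ i, (xbar i) ^ 2 ≤ ybar i)
    (γ : Fin m → ℝ) (hγ : ∀ k, 0 ≤ γ k)
    (ν : ℝ) (hν : ν = aJ + ∑ k, γ k * a k)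
    (hstat : ∀ i, bJ i + (∑ k, γ k * b k i) + ν * xbar i = 0)
    (hcomp : ∀ k, γ k * (a k * (∑ i, ybar i) + 2 * (b k ⬝ᵥ xbar) + c k) = 0)
    (hcompν : ∀ i, ν * ((xbar i) ^ 2 - ybar i) = 0)
    (hνpos : 0 < ν) :
    (∀ i, ybar i = (xbar i) ^ 2) ∧
    (∀ k, f k xbar ≤ 0) ∧
    (∀ x : Fin n → ℝ, (∀ k, f k x ≤ 0) → J xbar ≤ J x) ∧
    -- exactness of SDP2: its optimal value equals the objective of SDP2 at (x̄, ȳ)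
    sInf {t : ℝ | ∃ x y : Fin n → ℝ,
        (∀ k, a k * (∑ i, y i) + 2 * (b k ⬝ᵥ x) + c k ≤ 0) ∧
        (∀ i, (x i) ^ 2 ≤ y i) ∧
        t = aJ * (∑ i, y i) + 2 * (bJ ⬝ᵥ x)}
      = aJ * (∑ i, ybar i) + 2 * (bJ ⬝ᵥ xbar) := by
  have hL : ∀ x y : Fin n → ℝ, aJ * (∑ i, y i) + 2 * (bJ ⬝ᵥ x)
      + ∑ k, γ k * (a k * (∑ i, y i) + 2 * (b k ⬝ᵥ x) + c k)
      = ∑ i, ν * (y i - 2 * xbar i * x i) + ∑ k, γ k * c k := by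
    intro x y
    have h1 : ∑ k, γ k * (a k * (∑ i, y i) + 2 * (b k ⬝ᵥ x) + c k)
        = (∑ k, γ k * a k) * (∑ i, y i) + 2 * (∑ k, γ k * (b k ⬝ᵥ x)) + ∑ k, γ k * c k := by
      rw [Finset.sum_mul, Finset.mul_sum, ← Finset.sum_add_distrib, ← Finset.sum_add_distrib]
      exact Finset.sum_congr rfl fun k _ => by ring
    have h2 : ∑ k, γ k * (b k ⬝ᵥ x) = ∑ i, (∑ k, γ k * b k i) * x i := by
      simp only [dotProduct, Finset.mul_sum, Finset.sum_mul]
      rw [Finset.sum_comm]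
      exact Finset.sum_congr rfl fun i _ => Finset.sum_congr rfl fun k _ => by ring
    have h3 : ∑ i, ν * (y i - 2 * xbar i * x i)
        = ν * (∑ i, y i) + 2 * (bJ ⬝ᵥ x + ∑ i, (∑ k, γ k * b k i) * x i) := by
      simp only [dotProduct]
      rw [← Finset.sum_add_distrib, Finset.mul_sum, Finset.mul_sum, ← Finset.sum_add_distrib]
      refine Finset.sum_congr rfl fun i _ => ?_
      linear_combination (-2 * x i) * hstat i
    rw [h1, h2, h3, hν]
    ring
  have hy : ∀ i, ybar i = (xbar i) ^ 2 := by
    intro i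
    rcases mul_eq_zero.mp (hcompν i) with h | h
    · exact absurd h hνpos.ne'
    · linarith
  have hsq : ∀ x : Fin n → ℝ, x ⬝ᵥ x = ∑ i, (x i) ^ 2 := by
    intro x
    simp only [dotProduct]
    exact Finset.sum_congr rfl fun i _ => by ring
  have hyx : ∑ i, ybar i = xbar ⬝ᵥ xbar := by
    rw [hsq]
    exact Finset.sum_congr rfl fun i _ => hy i
  have hopt : ∀ x y : Fin n → ℝ,
      (∀ k, a k * (∑ i, y i) + 2 * (b k ⬝ᵥ x) + c k ≤ 0) → (∀ i, (x i) ^ 2 ≤ y i) →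
      aJ * (∑ i, ybar i) + 2 * (bJ ⬝ᵥ xbar) ≤ aJ * (∑ i, y i) + 2 * (bJ ⬝ᵥ x) := by
    intro x y h1 h2
    have e1 := hL x y
    have e2 := hL xbar ybar
    rw [Finset.sum_eq_zero fun k _ => hcomp k] at e2
    have e3 : ∑ k, γ k * (a k * (∑ i, y i) + 2 * (b k ⬝ᵥ x) + c k) ≤ 0 :=
      Finset.sum_nonpos fun k _ => mul_nonpos_of_nonneg_of_nonpos (hγ k) (h1 k)
    have e4 : ∑ i, ν * (ybar i - 2 * xbar i * xbar i) ≤ ∑ i, ν * (y i - 2 * xbar i * x i) := by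
      refine Finset.sum_le_sum fun i _ => mul_le_mul_of_nonneg_left ?_ hνpos.le
      rw [hy i]
      nlinarith [h2 i, sq_nonneg (x i - xbar i)]
    linarith
  refine ⟨hy, ?_, ?_, ?_⟩
  · intro k
    rw [hf, ← hyx]
    exact hfeas1 k
  · intro x hx
    have h := hopt x (fun i => (x i) ^ 2) (fun k => by
      have := hx k
      rwa [hf, hsq] at this) (fun i => le_rfl)
    rw [hJ, hJ, ← hyx, hsq x]
    linarith
  · refine IsLeast.csInf_eq ⟨⟨xbar, ybar, hfeas1, hfeas2, rfl⟩, ?_⟩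
    rintro t ⟨x, y, h1, h2, rfl⟩
    exact hopt x y h1 h2
end

section
/- Consider problem (P1) with two constraints. Let γ_1 > 0 and set w := 1 + 2γ_1 a_1. Suppose w > 0, suppose γ_1 satisfies the equation a_1·(γ_1²/w²)·‖b_1‖² − (γ_1/w)·‖b_1‖² + c_1 = 0, and set x* := −(γ_1/w)·b_1. If g_2(x*) ≤ 0, then x* is a global minimizer of (P1): for every x ∈ ℝⁿ with g_1(x) ≤ 0 and g_2(x) ≤ 0 one has ½‖x‖² ≥ ½‖x*‖². -/
open Matrix

/-- Problem (P1), single active constraint, case `w > 0`: if `γ₁ > 0`,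
`w := 1 + 2γ₁a₁ > 0`, `γ₁` solves `a₁(γ₁²/w²)‖b₁‖² − (γ₁/w)‖b₁‖² + c₁ = 0`, and
`x* := −(γ₁/w)·b₁` satisfies `g₂(x*) ≤ 0`, then `x*` is a global minimizer of (P1). -/
theorem stmt_19 (n : ℕ) (a1 a2 : ℝ) (b1 b2 : Fin n → ℝ) (c1 c2 : ℝ)
    (g1 g2 : (Fin n → ℝ) → ℝ)
    (hg1 : ∀ x, g1 x = a1 * (x ⬝ᵥ x) + b1 ⬝ᵥ x + c1)
    (hg2 : ∀ x, g2 x = a2 * (x ⬝ᵥ x) + b2 ⬝ᵥ x + c2)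
    (γ1 : ℝ) (hγ1 : 0 < γ1)
    (w : ℝ) (hw : w = 1 + 2 * γ1 * a1) (hwpos : 0 < w)
    (heq : a1 * (γ1 ^ 2 / w ^ 2) * (b1 ⬝ᵥ b1) - (γ1 / w) * (b1 ⬝ᵥ b1) + c1 = 0)
    (xstar : Fin n → ℝ) (hx : xstar = -((γ1 / w) • b1))
    (hfeas2 : g2 xstar ≤ 0) :
    ∀ x : Fin n → ℝ, g1 x ≤ 0 → g2 x ≤ 0 →
      (1 / 2) * (xstar ⬝ᵥ xstar) ≤ (1 / 2) * (x ⬝ᵥ x) := by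
  intro x h1 _
  rw [hg1] at h1
  obtain ⟨t, ht⟩ : ∃ t, t = γ1 / w := ⟨_, rfl⟩
  have hgt : γ1 = t * w := by rw [ht]; field_simp
  have h0 : 0 ≤ (x + t • b1) ⬝ᵥ (x + t • b1) :=
    Finset.sum_nonneg fun i _ => mul_self_nonneg _
  have e0 : (x + t • b1) ⬝ᵥ (x + t • b1)
      = x ⬝ᵥ x + 2 * t * (b1 ⬝ᵥ x) + t ^ 2 * (b1 ⬝ᵥ b1) := by
    simp only [add_dotProduct, dotProduct_add, smul_dotProduct, dotProduct_smul, smul_eq_mul,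
      dotProduct_comm x b1]
    ring
  have e1 : xstar ⬝ᵥ xstar = t ^ 2 * (b1 ⬝ᵥ b1) := by
    rw [hx, ← ht]
    simp only [neg_dotProduct, dotProduct_neg, smul_dotProduct, dotProduct_smul, smul_eq_mul]
    ring
  rw [← div_pow, ← ht] at heq
  rw [e0] at h0
  rw [e1]
  generalize x ⬝ᵥ x = X at *
  generalize b1 ⬝ᵥ x = D at *
  generalize b1 ⬝ᵥ b1 = B at *
  have p1 := mul_nonneg hwpos.le h0
  have p2 := mul_nonneg hγ1.le (sub_nonneg.2 h1)
  have hc : c1 = t * B - a1 * t ^ 2 * B := by linarith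
  have key : X - t ^ 2 * B = w * (X + 2 * t * D + t ^ 2 * B)
      + 2 * (γ1 * (0 - (a1 * X + D + c1))) := by
    rw [hc]
    linear_combination (-X + t ^ 2 * B) * hw + (2 * D + 2 * t * B) * hgt
  linarith
end
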